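/- For every prime p and every integer N ≥ 2, the integral 𝒵_N(ℙ¹(ℚ_p), s) converges absolutely if and only if s ∈ Ω_N, and in this case 𝒵_N(ℙ¹(ℚ_p), s) = (1/(p+1)^{N−1}) · Σ_{𝔖 ∈ ℛ_N} [(p^{N + Σ_{i<j} s_{ij}} + 1 − deg_𝔖([N])) / (p + 1 − deg_𝔖([N]))] · ∏_{λ ∈ ℬ(𝔖)} (p−1)_{deg_𝔖(λ)−1} / (p^{e_λ(s)} − 1), where the summand for each 𝔖 is well-defined even when deg_𝔖([N]) = p+1, via the cancellation (p−1)_{deg_𝔖([N])−1}/(p + 1 − deg_𝔖([N])) = (p−1)_{deg_𝔖([N])−2}. -/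

import Mathlib

open MeasureTheory
open scoped LinearAlgebra.Projectivization

namespace LogCoulomb

noncomputable section

/-! ### The projective line over `ℚ_p`, its spherical metric and `PGL₂`-invariant measure -/

variable (p : ℕ) [Fact p.Prime]

instance : MeasurableSpace ℚ_[p] := borel _
instance : BorelSpace ℚ_[p] := ⟨rfl⟩

/-- The projective line over `ℚ_p`. -/
abbrev P1 := ℙ ℚ_[p] (Fin 2 → ℚ_[p])

instance : TopologicalSpace (P1 p) :=
  inferInstanceAs (TopologicalSpace (Quotient _))

instance : MeasurableSpace (P1 p) := borel _
instance : BorelSpace (P1 p) := ⟨rfl⟩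

/-- Spherical distance on homogeneous coordinates:
`δ((x₀,x₁),(y₀,y₁)) = |x₀y₁ - x₁y₀| / (max(|x₀|,|x₁|) ⬝ max(|y₀|,|y₁|))`. -/
def sdelta (x y : Fin 2 → ℚ_[p]) : ℝ :=
  ‖x 0 * y 1 - x 1 * y 0‖ / (max ‖x 0‖ ‖x 1‖ * max ‖y 0‖ ‖y 1‖)

/-- The spherical metric on `ℙ¹(ℚ_p)`, defined via the canonical representatives. -/
def pdelta (ξ η : P1 p) : ℝ := sdelta p ξ.rep η.rep

open Classical in
/-- The action of a matrix on `ℙ¹(ℚ_p)`: `[x₀:x₁] ↦ [a x₀ + b x₁ : c x₀ + d x₁]`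
(well-defined, and given by the first branch of the `if`, whenever `A` is invertible). -/
def mobius (A : Matrix (Fin 2) (Fin 2) ℚ_[p]) (ξ : P1 p) : P1 p :=
  if h : A.mulVec ξ.rep ≠ 0 then Projectivization.mk ℚ_[p] (A.mulVec ξ.rep) h else ξ

/-- `ν` is invariant under the action of `GL₂(ℤ_p)` on `ℙ¹(ℚ_p)`; membership of the matrix
entries in `ℤ_p`, and invertibility of the matrix over `ℤ_p`, are phrased via the `p`-adic
norm on `ℚ_p`. -/
def IsGLInvariant (ν : Measure (P1 p)) : Prop :=
  ∀ A : Matrix (Fin 2) (Fin 2) ℚ_[p],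
    (∀ i j, ‖A i j‖ ≤ 1) → ‖A.det‖ = 1 →
      ∀ M : Set (P1 p), MeasurableSet M → ν (mobius p A '' M) = ν M

/-- The embedding `ι : ℚ_p → ℙ¹(ℚ_p)`, `x ↦ [x : 1]`. -/
def iota (x : ℚ_[p]) : P1 p :=
  Projectivization.mk ℚ_[p] ![x, 1] (by
    intro h
    have h1 := congrFun h 1
    simp at h1)

/-! ### Canonical partition functions -/

/-- The pairs `(i,j)` with `i < j`. -/
def pairs (N : ℕ) : Finset (Fin N × Fin N) := Finset.univ.filter fun q => q.1 < q.2

/-- The closed unit ball `ℤ_p = R` inside `ℚ_p`. -/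
def Zball : Set ℚ_[p] := {x | ‖x‖ ≤ 1}

/-- The open unit ball `pℤ_p = P` inside `ℚ_p`. -/
def Pball : Set ℚ_[p] := {x | ‖x‖ < 1}

/-- The one-component canonical partition function
`Z_N(X, β) = ∫_{X^N} ∏_{i<j} |x_i - x_j|^β dμ^N` (as a Bochner integral, whether or not it
converges absolutely). -/
def ZN (μ : Measure ℚ_[p]) [SigmaFinite μ] (X : Set ℚ_[p]) (N : ℕ) (β : ℂ) : ℂ :=
  ∫ x : Fin N → ℚ_[p], ∏ q ∈ pairs N, (‖x q.1 - x q.2‖ : ℂ) ^ β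
    ∂(Measure.pi fun _ => μ.restrict X)

/-- The multivariate canonical partition function
`𝒵_I(X, s) = ∫_{X^I} ∏_{i<j, i,j ∈ I} |x_i - x_j|^{s_{ij}} dμ^I` for a subset `I ⊆ [N]`. -/
def ZI (μ : Measure ℚ_[p]) [SigmaFinite μ] (X : Set ℚ_[p]) {N : ℕ} (I : Finset (Fin N))
    (s : Fin N → Fin N → ℂ) : ℂ :=
  ∫ x : I → ℚ_[p],
    ∏ q ∈ Finset.univ.filter (fun q : (↥I) × (↥I) => (q.1 : Fin N) < (q.2 : Fin N)),
      (‖x q.1 - x q.2‖ : ℂ) ^ s q.1.1 q.2.1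
    ∂(Measure.pi fun _ => μ.restrict X)

/-- The multivariate canonical partition function
`𝒵_N(ℙ¹(ℚ_p), s) = ∫_{(ℙ¹(ℚ_p))^N} ∏_{i<j} δ(ξ_i,ξ_j)^{s_{ij}} dν^N`. -/
def ZP1s (ν : Measure (P1 p)) [SigmaFinite ν] (N : ℕ) (s : Fin N → Fin N → ℂ) : ℂ :=
  ∫ x : Fin N → P1 p, ∏ q ∈ pairs N, ((pdelta p (x q.1) (x q.2) : ℝ) : ℂ) ^ s q.1 q.2
    ∂(Measure.pi fun _ => ν)

/-- The one-component canonical partition function `Z_N(ℙ¹(ℚ_p), β)`. -/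
def ZP1 (ν : Measure (P1 p)) [SigmaFinite ν] (N : ℕ) (β : ℂ) : ℂ :=
  ∫ x : Fin N → P1 p, ∏ q ∈ pairs N, ((pdelta p (x q.1) (x q.2) : ℝ) : ℂ) ^ β
    ∂(Measure.pi fun _ => ν)

/-! ### The quadratic recurrence -/

/-- The factor `ρ_{N,k}(t,β)` appearing in the quadratic recurrence; here
`N.choose 2 = N(N-1)/2`. -/
def rho (N k : ℕ) (t : ℝ) (β : ℂ) : ℂ :=
  if t = 0 then
    (((N : ℂ) + (N.choose 2 : ℂ) * β) * (1 - 2 * (k : ℂ) / (N : ℂ)) + 1) /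
      (((N : ℂ) + (N.choose 2 : ℂ) * β) - 1)
  else
    Complex.sinh (((t : ℂ) / 2) * (((N : ℂ) + (N.choose 2 : ℂ) * β) * (1 - 2 * (k : ℂ) / (N : ℂ)) + 1)) /
      Complex.sinh (((t : ℂ) / 2) * (((N : ℂ) + (N.choose 2 : ℂ) * β) - 1))

/-- The quadratic recurrence: `F 0 = F 1 = 1` and
`F N t β = ∑_{k=1}^{N-1} (k/N) ρ_{N,k}(t,β) F_{N-k}(t,β) F_k(t,β)` for `N ≥ 2`. -/
def F : ℕ → ℝ → ℂ → ℂ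
  | 0, _, _ => 1
  | 1, _, _ => 1
  | N + 2, t, β =>
    ∑ k ∈ (Finset.Icc 1 (N + 1)).attach,
      (((k : ℕ) : ℂ) / ((N : ℂ) + 2)) * rho (N + 2) k t β *
        F (N + 2 - (k : ℕ)) t β * F (k : ℕ) t β
  decreasing_by
  all_goals
    have hk := Finset.mem_Icc.mp k.2
    omega

/-! ### Splitting chains -/

/-- A splitting chain `Λ_0 > Λ_1 > ⋯ > Λ_L` of set partitions of the subset `I ⊆ [N]`,
beginning with the trivial partition `{I}` and ending with the partition of `I` into
singletons.  (The values `Λ ℓ` for `ℓ > L` are required to be `∅`, so that a chain is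
determined by the genuine data `Λ_0, …, Λ_L`.) -/
structure SplChain (N : ℕ) (I : Finset (Fin N)) where
  L : ℕ
  Λ : ℕ → Finset (Finset (Fin N))
  nonempty_mem : ∀ ℓ ≤ L, ∀ B ∈ Λ ℓ, B.Nonempty
  subset_mem : ∀ ℓ ≤ L, ∀ B ∈ Λ ℓ, B ⊆ I
  cover : ∀ ℓ ≤ L, ∀ i ∈ I, ∃! B, B ∈ Λ ℓ ∧ i ∈ B
  first : Λ 0 = {I}
  last : Λ L = I.image fun i => {i}
  refines : ∀ ℓ < L, ∀ B ∈ Λ (ℓ + 1), ∃ C ∈ Λ ℓ, B ⊆ C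
  strict : ∀ ℓ < L, Λ (ℓ + 1) ≠ Λ ℓ
  trailing : ∀ ℓ, L < ℓ → Λ ℓ = ∅

variable {N : ℕ} {I : Finset (Fin N)}

/-- The branches of a splitting chain: the non-singleton parts,
`ℬ(𝔖) = (Λ_0 ∪ ⋯ ∪ Λ_{L-1}) \ Λ_L`. -/
def SplChain.branches (S : SplChain N I) : Finset (Finset (Fin N)) :=
  ((Finset.range S.L).biUnion S.Λ) \ S.Λ S.L

/-- The depth `ℓ_𝔖(λ) = max {ℓ : λ ∈ Λ_ℓ}` of a branch. -/
def SplChain.depth (S : SplChain N I) (lam : Finset (Fin N)) : ℕ :=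
  ((Finset.range (S.L + 1)).filter fun ℓ => lam ∈ S.Λ ℓ).sup id

/-- The degree `deg_𝔖(λ) = #{λ' ∈ Λ_{ℓ_𝔖(λ)+1} : λ' ⊆ λ}` of a branch. -/
def SplChain.degree (S : SplChain N I) (lam : Finset (Fin N)) : ℕ :=
  ((S.Λ (S.depth lam + 1)).filter fun lam' => lam' ⊆ lam).card

/-- A splitting chain is reduced if every branch appears in exactly one partition of the
chain (namely the one at its depth). -/
def SplChain.Reduced (S : SplChain N I) : Prop :=
  ∀ lam ∈ S.branches, ∀ ℓ ≤ S.L, (lam ∈ S.Λ ℓ ↔ ℓ = S.depth lam)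

/-- `e_λ(s) = #λ - 1 + ∑_{i<j, i,j ∈ λ} s_{ij}`. -/
def eexp (lam : Finset (Fin N)) (s : Fin N → Fin N → ℂ) : ℂ :=
  (lam.card : ℂ) - 1 + ∑ q ∈ (pairs N).filter fun q => q.1 ∈ lam ∧ q.2 ∈ lam, s q.1 q.2

/-- Membership in `Ω_I`: `Re e_λ(s) > 0` for every `λ ⊆ I` with `#λ > 1`. -/
def InOmega (I : Finset (Fin N)) (s : Fin N → Fin N → ℂ) : Prop :=
  ∀ lam ⊆ I, 1 < lam.card → 0 < (eexp lam s).re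


/-- The multivariate canonical partition function `𝒵_N(ℤ_p, s)` over `Fin N`-indexed tuples. -/
def ZNs (μ : Measure ℚ_[p]) [SigmaFinite μ] (X : Set ℚ_[p]) (N : ℕ)
    (s : Fin N → Fin N → ℂ) : ℂ :=
  ∫ x : Fin N → ℚ_[p], ∏ q ∈ pairs N, (‖x q.1 - x q.2‖ : ℂ) ^ s q.1 q.2
    ∂(Measure.pi fun _ => μ.restrict X)

/-- The ball `p^v ℤ_p = {x : |x| ≤ p^{-v}}` in `ℚ_p`. -/
def pvball (v : ℤ) : Set ℚ_[p] := {x | ‖x‖ ≤ (p : ℝ) ^ (-v)}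

/-- `G_N(q,β) = N! q^{(1/2)(N choose 2)β} F_N(log q, β)`. -/
def GN (N : ℕ) (β : ℂ) (q : ℝ) : ℂ :=
  (N.factorial : ℂ) * (q : ℂ) ^ ((N.choose 2 : ℂ) * β / 2) * F N (Real.log q) β

/-- `H_N(q,β)`, the efficient formula for `Z_N(ℙ¹(K),β)` as a function of `q`. -/
def HN (N : ℕ) (β : ℂ) (q : ℝ) : ℂ :=
  (N.factorial : ℂ) * ∑ k ∈ Finset.range (N + 1),
    Complex.cosh (((Real.log q : ℂ) / 2) * ((N : ℂ) + (N.choose 2 : ℂ) * β) *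
          (1 - 2 * (k : ℂ) / (N : ℂ))) /
        (2 * Complex.cosh ((Real.log q : ℂ) / 2)) ^ N *
      F (N - k) (Real.log q) β * F k (Real.log q) β

end

section Comb
open Finset

variable {N : ℕ}

def IsPart (I : Finset (Fin N)) (P : Finset (Finset (Fin N))) : Prop :=
  (∀ B ∈ P, B.Nonempty) ∧ (∀ B ∈ P, B ⊆ I) ∧ ∀ i ∈ I, ∃! B, B ∈ P ∧ i ∈ B

open Classical in
noncomputable def parts (I : Finset (Fin N)) : Finset (Finset (Finset (Fin N))) :=
  Finset.univ.filter (IsPart I)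

lemma mem_parts {I : Finset (Fin N)} {P : Finset (Finset (Fin N))} :
    P ∈ parts I ↔ IsPart I P := by
  classical
  simp [parts]

lemma IsPart.eq_of_mem {I : Finset (Fin N)} {P : Finset (Finset (Fin N))} (h : IsPart I P)
    {B C : Finset (Fin N)} {i : Fin N} (hB : B ∈ P) (hC : C ∈ P) (hi : i ∈ B) (hj : i ∈ C) :
    B = C :=
  (h.2.2 i (h.2.1 B hB hi)).unique ⟨hB, hi⟩ ⟨hC, hj⟩

lemma IsPart.exists_mem {I : Finset (Fin N)} {P : Finset (Finset (Fin N))} (h : IsPart I P)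
    {i : Fin N} (hi : i ∈ I) : ∃ B ∈ P, i ∈ B := by
  obtain ⟨B, hB, -⟩ := h.2.2 i hi
  exact ⟨B, hB.1, hB.2⟩

lemma isPart_self {I : Finset (Fin N)} (hI : I.Nonempty) : IsPart I {I} := by
  refine ⟨by simpa using hI, by simp, fun i hi => ⟨I, by simp [hi], by simp⟩⟩

lemma IsPart.eq_single {I : Finset (Fin N)} {P : Finset (Finset (Fin N))} (h : IsPart I P)
    (hI : I ∈ P) : P = {I} := by
  ext B
  simp only [mem_singleton]
  constructor
  · intro hB
    obtain ⟨i, hi⟩ := h.1 B hB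
    exact h.eq_of_mem hB hI hi (h.2.1 B hB hi)
  · rintro rfl; exact hI

lemma isPart_pair {I B : Finset (Fin N)} (hB : B ⊆ I) (h1 : B.Nonempty) (h2 : (I \ B).Nonempty) :
    IsPart I {B, I \ B} := by
  refine ⟨?_, ?_, ?_⟩
  · intro C hC
    simp only [mem_insert, mem_singleton] at hC
    rcases hC with rfl | rfl <;> assumption
  · intro C hC
    simp only [mem_insert, mem_singleton] at hC
    rcases hC with rfl | rfl
    · exact hB
    · exact sdiff_subset
  · intro i hi
    by_cases hiB : i ∈ B
    · refine ⟨B, by simp [hiB], ?_⟩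
      rintro C ⟨hC, hiC⟩
      simp only [mem_insert, mem_singleton] at hC
      rcases hC with rfl | rfl
      · rfl
      · simp [hiB] at hiC
    · refine ⟨I \ B, by simp [hiB, hi], ?_⟩
      rintro C ⟨hC, hiC⟩
      simp only [mem_insert, mem_singleton] at hC
      rcases hC with rfl | rfl
      · exact absurd hiC hiB
      · rfl

lemma IsPart.two_le_card {I : Finset (Fin N)} {P : Finset (Finset (Fin N))} (h : IsPart I P)
    (hI : I.Nonempty) (hP : P ≠ {I}) : 2 ≤ P.card := by
  obtain ⟨i, hi⟩ := hI
  obtain ⟨B, hB, hiB⟩ := h.exists_mem hi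
  have hBI : B ≠ I := by
    rintro rfl
    exact hP (h.eq_single hB)
  obtain ⟨j, hj, hjB⟩ := Finset.exists_of_ssubset ((h.2.1 B hB).ssubset_of_ne hBI)
  obtain ⟨C, hC, hjC⟩ := h.exists_mem hj
  have : B ≠ C := by rintro rfl; exact hjB hjC
  exact Finset.one_lt_card.2 ⟨B, hB, C, hC, this⟩

lemma IsPart.card_pos {I : Finset (Fin N)} {P : Finset (Finset (Fin N))} (h : IsPart I P)
    (hI : I.Nonempty) : 0 < P.card := by
  obtain ⟨i, hi⟩ := hI
  obtain ⟨B, hB, hiB⟩ := h.exists_mem hi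
  exact Finset.card_pos.2 ⟨B, hB⟩

/-- blocks of a proper partition are smaller -/
lemma IsPart.card_lt {I : Finset (Fin N)} {P : Finset (Finset (Fin N))} (h : IsPart I P)
    (hP : P ≠ {I}) {B : Finset (Fin N)} (hB : B ∈ P) : B.card < I.card := by
  apply Finset.card_lt_card
  refine (h.2.1 B hB).ssubset_of_ne ?_
  rintro rfl
  exact hP (h.eq_single hB)

lemma isPart_of_card_le_one {I : Finset (Fin N)} (hI : I.Nonempty) (hc : I.card ≤ 1)
    {P : Finset (Finset (Fin N))} (h : IsPart I P) : P = {I} := by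
  by_contra hP
  obtain ⟨i, hi⟩ := hI
  obtain ⟨B, hB, hiB⟩ := h.exists_mem hi
  have := h.card_lt hP hB
  have := Finset.card_pos.2 ⟨i, hiB⟩
  omega

def botP (N : ℕ) : Finset (Finset (Fin N)) := (Finset.univ : Finset (Fin N)).image fun i => {i}

def Step (Q Q' : Finset (Finset (Fin N))) : Prop :=
  IsPart univ Q' ∧ (∀ B ∈ Q', ∃ C ∈ Q, B ⊆ C) ∧ ∀ B ∈ Q, 1 < B.card → B ∉ Q'

open Classical in
noncomputable def steps (Q : Finset (Finset (Fin N))) : Finset (Finset (Finset (Fin N))) :=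
  Finset.univ.filter (Step Q)

lemma mem_steps {Q Q' : Finset (Finset (Fin N))} : Q' ∈ steps Q ↔ Step Q Q' := by
  classical
  simp [steps]

lemma mem_botP {B : Finset (Fin N)} : B ∈ botP N ↔ B.card = 1 := by
  simp only [botP, mem_image, mem_univ, true_and, Finset.card_eq_one]
  constructor
  · rintro ⟨i, rfl⟩; exact ⟨i, rfl⟩
  · rintro ⟨i, rfl⟩; exact ⟨i, rfl⟩

lemma eq_botP {Q : Finset (Finset (Fin N))} (hQ : IsPart univ Q)
    (h : ∀ B ∈ Q, ¬ 1 < B.card) : Q = botP N := by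
  have key : ∀ B ∈ Q, B.card = 1 := fun B hB => by
    have := h B hB
    have := Finset.card_pos.2 (hQ.1 B hB)
    omega
  ext B
  rw [mem_botP]
  constructor
  · exact key B
  · intro hB
    obtain ⟨i, rfl⟩ := Finset.card_eq_one.1 hB
    obtain ⟨C, hC, hiC⟩ := hQ.exists_mem (mem_univ i)
    obtain ⟨j, rfl⟩ := Finset.card_eq_one.1 (key C hC)
    simp only [mem_singleton] at hiC
    subst hiC
    exact hC

lemma isPart_botP : IsPart univ (botP N) := by
  refine ⟨fun B hB => ?_, fun _ _ => subset_univ _, fun i _ => ⟨{i}, ?_, ?_⟩⟩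
  · rw [mem_botP] at hB
    exact Finset.card_pos.1 (by omega)
  · simp [mem_botP]
  · rintro C ⟨hC, hi⟩
    rw [mem_botP] at hC
    obtain ⟨j, rfl⟩ := Finset.card_eq_one.1 hC
    simp only [mem_singleton] at hi
    rw [hi]

open Classical in
noncomputable def relP (Q : Finset (Finset (Fin N))) : Finset (Fin N × Fin N) :=
  Finset.univ.filter fun q => ∃ B ∈ Q, q.1 ∈ B ∧ q.2 ∈ B

lemma relP_lt {Q Q' : Finset (Finset (Fin N))} (hQ : IsPart univ Q) (hb : Q ≠ botP N)
    (h : Step Q Q') : (relP Q').card < (relP Q).card := by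
  classical
  apply Finset.card_lt_card
  rw [Finset.ssubset_iff_of_subset]
  · have : ∃ B ∈ Q, 1 < B.card := by
      by_contra hcon
      push Not at hcon
      exact hb (eq_botP hQ (fun B hB => not_lt.2 (hcon B hB)))
    obtain ⟨B, hB, hc⟩ := this
    obtain ⟨i, hi⟩ := hQ.1 B hB
    obtain ⟨C, hC, hiC⟩ := h.1.exists_mem (mem_univ i)
    obtain ⟨D, hD, hCD⟩ := h.2.1 C hC
    have hDB : D = B := hQ.eq_of_mem hD hB (hCD hiC) hi
    subst hDB
    have hne : C ≠ D := by rintro rfl; exact h.2.2 C hD hc hC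
    obtain ⟨j, hj, hjC⟩ := Finset.exists_of_ssubset (hCD.ssubset_of_ne hne)
    refine ⟨(i, j), ?_, ?_⟩
    · simp only [relP, mem_filter, mem_univ, true_and]
      exact ⟨D, hD, hi, hj⟩
    · simp only [relP, mem_filter, mem_univ, true_and]
      rintro ⟨E, hE, hiE, hjE⟩
      have := h.1.eq_of_mem hE hC hiE hiC
      subst this
      exact hjC hjE
  · intro q
    simp only [relP, mem_filter, mem_univ, true_and]
    rintro ⟨B, hB, h1, h2⟩
    obtain ⟨C, hC, hBC⟩ := h.2.1 B hB
    exact ⟨C, hC, hBC h1, hBC h2⟩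

def RC (Q : Finset (Finset (Fin N))) (x : ℕ × (ℕ → Finset (Finset (Fin N)))) : Prop :=
  x.2 0 = Q ∧ (∀ l < x.1, x.2 l ≠ botP N ∧ Step (x.2 l) (x.2 (l + 1))) ∧ x.2 x.1 = botP N ∧
    ∀ l, x.1 < l → x.2 l = ∅

def consC (Q : Finset (Finset (Fin N))) (y : ℕ × (ℕ → Finset (Finset (Fin N)))) :
    ℕ × (ℕ → Finset (Finset (Fin N))) :=
  (y.1 + 1, fun n => Nat.casesOn n Q y.2)

lemma consC_inj (Q : Finset (Finset (Fin N))) : Function.Injective (consC Q) := by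
  rintro ⟨a, f⟩ ⟨b, g⟩ h
  simp only [consC, Prod.mk.injEq, Nat.add_right_cancel_iff] at h
  refine Prod.ext h.1 (funext fun n => ?_)
  exact congrFun h.2 (n + 1)

lemma RC_bot (x : ℕ × (ℕ → Finset (Finset (Fin N)))) :
    RC (botP N) x ↔ x = (0, fun n => if n = 0 then botP N else ∅) := by
  constructor
  · rintro ⟨h0, h1, h2, h3⟩
    have hx : x.1 = 0 := by
      by_contra hx
      exact (h1 0 (Nat.pos_of_ne_zero hx)).1 h0
    refine Prod.ext hx (funext fun n => ?_)
    rcases Nat.eq_zero_or_pos n with rfl | hn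
    · simp [h0]
    · simp [hn.ne', h3 n (by omega)]
  · rintro rfl
    refine ⟨by simp, by simp, by simp, fun l hl => ?_⟩
    simp at hl
    simp [hl.ne']

lemma RC_step {Q : Finset (Finset (Fin N))} (hQ : Q ≠ botP N)
    (x : ℕ × (ℕ → Finset (Finset (Fin N)))) :
    RC Q x ↔ ∃ Q', Step Q Q' ∧ ∃ y, RC Q' y ∧ consC Q y = x := by
  constructor
  · rintro ⟨h0, h1, h2, h3⟩
    obtain ⟨a, f⟩ := x
    simp only at h0 h1 h2 h3
    have ha : a ≠ 0 := by
      rintro rfl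
      exact hQ (h0 ▸ h2)
    obtain ⟨b, rfl⟩ := Nat.exists_eq_succ_of_ne_zero ha
    refine ⟨f 1, ?_, (b, fun n => f (n + 1)), ⟨rfl, ?_, h2, ?_⟩, ?_⟩
    · have := (h1 0 (by omega)).2
      rwa [h0] at this
    · intro l hl
      exact h1 (l + 1) (by simpa using hl)
    · intro l hl
      exact h3 (l + 1) (by simpa using hl)
    · refine Prod.ext rfl (funext fun n => ?_)
      cases n with
      | zero => exact h0.symm
      | succ n => rfl
  · rintro ⟨Q', hs, y, ⟨h0, h1, h2, h3⟩, rfl⟩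
    refine ⟨rfl, ?_, h2, ?_⟩
    · intro l hl
      cases l with
      | zero => exact ⟨hQ, by simpa [consC, h0] using hs⟩
      | succ l => exact h1 l (by simpa [consC] using hl)
    · intro l hl
      cases l with
      | zero => simp [consC] at hl
      | succ l => exact h3 l (by simpa [consC] using hl)

lemma exists_RC {K : Type*} [Field K]
    (ω : Finset (Finset (Fin N)) → Finset (Finset (Fin N)) → K)
    (U : Finset (Finset (Fin N)) → K) (hbot : U (botP N) = 1)
    (hU : ∀ Q, IsPart univ Q → Q ≠ botP N → U Q = ∑ Q' ∈ steps Q, ω Q Q' * U Q') :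
    ∀ Q, IsPart univ Q → ∃ F : Finset (ℕ × (ℕ → Finset (Finset (Fin N)))),
      (∀ x, x ∈ F ↔ RC Q x) ∧
      ∑ x ∈ F, ∏ l ∈ range x.1, ω (x.2 l) (x.2 (l + 1)) = U Q := by
  classical
  intro Q
  induction hm : (relP Q).card using Nat.strong_induction_on generalizing Q with
  | _ m ih =>
  intro hQ
  by_cases hb : Q = botP N
  · subst hb
    refine ⟨{(0, fun n => if n = 0 then botP N else ∅)}, fun x => ?_, ?_⟩
    · rw [RC_bot, mem_singleton]
    · simp [hbot]
  · have hex : ∀ Q' ∈ steps Q, ∃ F : Finset (ℕ × (ℕ → Finset (Finset (Fin N)))),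
        (∀ x, x ∈ F ↔ RC Q' x) ∧
        ∑ x ∈ F, ∏ l ∈ range x.1, ω (x.2 l) (x.2 (l + 1)) = U Q' := by
      intro Q' hQ'
      rw [mem_steps] at hQ'
      exact ih _ (hm ▸ relP_lt hQ hb hQ') Q' rfl hQ'.1
    choose! F hF hFs using hex
    refine ⟨(steps Q).biUnion fun Q' => (F Q').image (consC Q), fun x => ?_, ?_⟩
    · rw [RC_step hb]
      simp only [mem_biUnion, mem_image]
      constructor
      · rintro ⟨Q', h1, y, hy, rfl⟩
        exact ⟨Q', mem_steps.1 h1, y, (hF Q' h1 y).1 hy, rfl⟩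
      · rintro ⟨Q', h1, y, hy, rfl⟩
        exact ⟨Q', mem_steps.2 h1, y, (hF Q' (mem_steps.2 h1) y).2 hy, rfl⟩
    · rw [Finset.sum_biUnion, hU Q hQ hb]
      · refine Finset.sum_congr rfl fun Q' hQ' => ?_
        rw [Finset.sum_image (fun a _ b _ h => consC_inj Q h), ← hFs Q' hQ', Finset.mul_sum]
        refine Finset.sum_congr rfl fun y hy => ?_
        have h0 : y.2 0 = Q' := ((hF Q' hQ' y).1 hy).1
        simp only [consC]
        rw [Finset.prod_range_succ']
        simp only [h0]
        exact mul_comm _ _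
      · intro Q₁ h₁ Q₂ h₂ hne
        rw [Function.onFun, Finset.disjoint_left]
        intro x hx1 hx2
        simp only [mem_image] at hx1 hx2
        obtain ⟨y, hy, rfl⟩ := hx1
        obtain ⟨z, hz, hzy⟩ := hx2
        have := consC_inj Q hzy
        subst this
        exact hne (((hF Q₁ h₁ z).1 hy).1.symm.trans ((hF Q₂ h₂ z).1 hz).1)

end Comb

section Comb2
open Finset

variable {N : ℕ} {K : Type*} [Field K]

def omg (w : Finset (Fin N) → ℕ → K) (Q Q' : Finset (Finset (Fin N))) : K :=
  ∏ B ∈ Q.filter (fun B => 1 < B.card), w B (Q'.filter (fun C => C ⊆ B)).card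

open Classical in
noncomputable def opt (B : Finset (Fin N)) : Finset (Finset (Finset (Fin N))) :=
  (parts B).filter fun P => 1 < B.card → B ∉ P

lemma mem_opt {B : Finset (Fin N)} {P : Finset (Finset (Fin N))} :
    P ∈ opt B ↔ IsPart B P ∧ (1 < B.card → B ∉ P) := by
  classical
  simp [opt, mem_parts]

/-- restricting a refinement -/
lemma step_restrict {Q Q' : Finset (Finset (Fin N))} (hQ : IsPart univ Q) (h : Step Q Q')
    {B : Finset (Fin N)} (hB : B ∈ Q) : Q'.filter (fun C => C ⊆ B) ∈ opt B := by
  rw [mem_opt]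
  refine ⟨⟨?_, ?_, ?_⟩, ?_⟩
  · intro C hC
    exact h.1.1 C (mem_filter.1 hC).1
  · intro C hC
    exact (mem_filter.1 hC).2
  · intro i hi
    obtain ⟨C, hC, hiC⟩ := h.1.exists_mem (mem_univ i)
    obtain ⟨D, hD, hCD⟩ := h.2.1 C hC
    have hDB : D = B := hQ.eq_of_mem hD hB (hCD hiC) hi
    subst hDB
    refine ⟨C, ⟨mem_filter.2 ⟨hC, hCD⟩, hiC⟩, ?_⟩
    rintro E ⟨hE, hiE⟩
    exact h.1.eq_of_mem (mem_filter.1 hE).1 hC hiE hiC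
  · intro hc hmem
    exact h.2.2 B hB hc (mem_filter.1 hmem).1

lemma union_filter {Q : Finset (Finset (Fin N))} (hQ : IsPart univ Q)
    (f : (B : Finset (Fin N)) → B ∈ Q → Finset (Finset (Fin N)))
    (hf : ∀ B hB, IsPart B (f B hB)) {B : Finset (Fin N)} (hB : B ∈ Q) :
    (Q.attach.biUnion fun B => f B.1 B.2).filter (fun C => C ⊆ B) = f B hB := by
  ext C
  simp only [mem_filter, mem_biUnion, mem_attach, true_and, Subtype.exists]
  constructor
  · rintro ⟨⟨D, hD, hC⟩, hCB⟩
    obtain ⟨i, hi⟩ := (hf D hD).1 C hC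
    have := hQ.eq_of_mem hD hB ((hf D hD).2.1 C hC hi) (hCB hi)
    subst this
    exact hC
  · intro hC
    exact ⟨⟨B, hB, hC⟩, (hf B hB).2.1 C hC⟩

lemma union_step {Q : Finset (Finset (Fin N))} (hQ : IsPart univ Q)
    (f : (B : Finset (Fin N)) → B ∈ Q → Finset (Finset (Fin N)))
    (hf : ∀ B hB, f B hB ∈ opt B) : Step Q (Q.attach.biUnion fun B => f B.1 B.2) := by
  have hf' := fun B hB => mem_opt.1 (hf B hB)
  refine ⟨⟨?_, fun _ _ => subset_univ _, ?_⟩, ?_, ?_⟩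
  · intro C
    simp only [mem_biUnion, mem_attach, true_and, Subtype.exists]
    rintro ⟨D, hD, hC⟩
    exact (hf' D hD).1.1 C hC
  · intro i _
    obtain ⟨B, hB, hiB⟩ := hQ.exists_mem (mem_univ i)
    obtain ⟨C, hC, hiC⟩ := (hf' B hB).1.exists_mem hiB
    refine ⟨C, ⟨?_, hiC⟩, ?_⟩
    · simp only [mem_biUnion, mem_attach, true_and, Subtype.exists]
      exact ⟨B, hB, hC⟩
    · intro E
      simp only [mem_biUnion, mem_attach, true_and, Subtype.exists]
      rintro ⟨⟨D, hD, hE⟩, hiE⟩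
      have := hQ.eq_of_mem hD hB ((hf' D hD).1.2.1 E hE hiE) hiB
      subst this
      exact (hf' D hD).1.eq_of_mem hE hC hiE hiC
  · intro C
    simp only [mem_biUnion, mem_attach, true_and, Subtype.exists]
    rintro ⟨D, hD, hC⟩
    exact ⟨D, hD, (hf' D hD).1.2.1 C hC⟩
  · intro B hB hc hmem
    have : B ∈ f B hB := by
      rw [← union_filter hQ f (fun B hB => (hf' B hB).1) hB]
      exact mem_filter.2 ⟨hmem, Subset.rfl⟩
    exact (hf' B hB).2 hc this

lemma prod_blocks {Q Q' : Finset (Finset (Fin N))} (hQ : IsPart univ Q) (h : Step Q Q')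
    (V : Finset (Fin N) → K) :
    ∏ B ∈ Q, ∏ C ∈ Q'.filter (fun C => C ⊆ B), V C = ∏ C ∈ Q', V C := by
  classical
  rw [← Finset.prod_biUnion]
  · congr 1
    ext C
    simp only [mem_biUnion, mem_filter]
    constructor
    · rintro ⟨_, _, h1, _⟩; exact h1
    · intro hC
      obtain ⟨D, hD, hCD⟩ := h.2.1 C hC
      exact ⟨D, hD, hC, hCD⟩
  · intro B hB D hD hne
    rw [Function.onFun, Finset.disjoint_left]
    intro C h1 h2
    simp only [mem_filter] at h1 h2
    obtain ⟨i, hi⟩ := h.1.1 C h1.1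
    exact hne (hQ.eq_of_mem hB hD (h1.2 hi) (h2.2 hi))

lemma opt_big {B : Finset (Fin N)} (hB : 1 < B.card) : opt B = (parts B).erase {B} := by
  ext P
  rw [mem_opt, mem_erase, mem_parts]
  constructor
  · rintro ⟨h1, h2⟩
    refine ⟨?_, h1⟩
    rintro rfl
    exact h2 hB (by simp)
  · rintro ⟨h1, h2⟩
    exact ⟨h2, fun _ hm => h1 (h2.eq_single hm)⟩

lemma opt_small {B : Finset (Fin N)} (hB : B.card = 1) : opt B = {{B}} := by
  have hne : B.Nonempty := Finset.card_pos.1 (by omega)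
  ext P
  rw [mem_opt, mem_singleton]
  constructor
  · rintro ⟨h1, h2⟩
    exact isPart_of_card_le_one hne hB.le h1
  · rintro rfl
    exact ⟨isPart_self hne, fun h => by omega⟩

lemma prod_step (w : Finset (Fin N) → ℕ → K) (V : Finset (Fin N) → K)
    (hV1 : ∀ B : Finset (Fin N), B.card = 1 → V B = 1)
    (hV : ∀ B : Finset (Fin N), 1 < B.card →
      V B = ∑ P ∈ (parts B).erase {B}, w B P.card * ∏ C ∈ P, V C)
    {Q : Finset (Finset (Fin N))} (hQ : IsPart univ Q) :
    ∏ B ∈ Q, V B = ∑ Q' ∈ steps Q, omg w Q Q' * ∏ C ∈ Q', V C := by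
  classical
  have hV' : ∀ B ∈ Q, V B = ∑ P ∈ opt B,
      (if 1 < B.card then w B P.card else 1) * ∏ C ∈ P, V C := by
    intro B hB
    by_cases hc : 1 < B.card
    · simp only [hc, if_true]
      rw [hV B hc, opt_big hc]
    · have h1 : B.card = 1 := by
        have := Finset.card_pos.2 (hQ.1 B hB)
        omega
      rw [opt_small h1]
      simp [h1]
  rw [Finset.prod_congr rfl hV', Finset.prod_sum]
  refine Finset.sum_bij' (fun f _ => Q.attach.biUnion fun B => f B.1 B.2)
    (fun Q' _ => fun B _ => Q'.filter (fun C => C ⊆ B)) ?_ ?_ ?_ ?_ ?_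
  · intro f hf
    rw [mem_steps]
    exact union_step hQ f (fun B hB => Finset.mem_pi.1 hf B hB)
  · intro Q' hQ'
    rw [Finset.mem_pi]
    intro B hB
    exact step_restrict hQ (mem_steps.1 hQ') hB
  · intro f hf
    funext B hB
    exact union_filter hQ f (fun B hB => (mem_opt.1 (Finset.mem_pi.1 hf B hB)).1) hB
  · intro Q' hQ'
    ext C
    simp only [mem_filter, mem_biUnion, mem_attach, true_and, Subtype.exists]
    constructor
    · rintro ⟨_, _, h1, _⟩; exact h1
    · intro hC
      obtain ⟨D, hD, hCD⟩ := (mem_steps.1 hQ').2.1 C hC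
      exact ⟨D, hD, hC, hCD⟩
  · intro f hf
    have hf1 := fun B hB => (mem_opt.1 (Finset.mem_pi.1 hf B hB)).1
    have hst := union_step hQ f (fun B hB => Finset.mem_pi.1 hf B hB)
    rw [Finset.prod_mul_distrib, ← prod_blocks hQ hst V, omg, Finset.prod_filter,
      ← Finset.prod_attach Q (fun B => ∏ C ∈ filter (fun C => C ⊆ B) _, V C),
      ← Finset.prod_attach Q (fun B => ite _ _ _)]
    congr 1
    · refine Finset.prod_congr rfl fun B _ => ?_
      rw [union_filter hQ f hf1 B.2]
    · refine Finset.prod_congr rfl fun B _ => ?_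
      rw [union_filter hQ f hf1 B.2]

/-! chains -/

lemma SplChain.isPart (S : SplChain N univ) {l : ℕ} (hl : l ≤ S.L) : IsPart univ (S.Λ l) :=
  ⟨S.nonempty_mem l hl, S.subset_mem l hl, S.cover l hl⟩

lemma SplChain.mem_branches (S : SplChain N univ) {B : Finset (Fin N)} :
    B ∈ S.branches ↔ ∃ l < S.L, B ∈ S.Λ l ∧ 1 < B.card := by
  have hlast : S.Λ S.L = botP N := S.last
  simp only [SplChain.branches, mem_sdiff, mem_biUnion, mem_range, hlast, mem_botP]
  constructor
  · rintro ⟨⟨l, hl, hB⟩, h1⟩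
    have := Finset.card_pos.2 (S.nonempty_mem l hl.le B hB)
    exact ⟨l, hl, hB, by omega⟩
  · rintro ⟨l, hl, hB, h1⟩
    exact ⟨⟨l, hl, hB⟩, by omega⟩

lemma step_ne {Q Q' : Finset (Finset (Fin N))} (hQ : IsPart univ Q) (hb : Q ≠ botP N)
    (h : Step Q Q') : Q' ≠ Q := by
  rintro rfl
  exact absurd (relP_lt hQ hb h) (lt_irrefl _)

lemma RC.isPart {x : ℕ × (ℕ → Finset (Finset (Fin N)))} {Q : Finset (Finset (Fin N))}
    (hQ : IsPart univ Q) (h : RC Q x) {l : ℕ} (hl : l ≤ x.1) : IsPart univ (x.2 l) := by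
  cases l with
  | zero => rw [h.1]; exact hQ
  | succ l => exact (h.2.1 l (by omega)).2.1

/-- a block in two different levels -/
lemma RC.refines {x : ℕ × (ℕ → Finset (Finset (Fin N)))} {Q : Finset (Finset (Fin N))}
    (h : RC Q x) {l m : ℕ} (hlm : l ≤ m) (hm : m ≤ x.1) {B : Finset (Fin N)}
    (hB : B ∈ x.2 m) : ∃ C ∈ x.2 l, B ⊆ C := by
  induction m, hlm using Nat.le_induction generalizing B with
  | base => exact ⟨B, hB, Subset.rfl⟩
  | succ m hlm ih =>
    obtain ⟨C, hC, hBC⟩ := (h.2.1 m (by omega)).2.2.1 B hB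
    obtain ⟨D, hD, hCD⟩ := ih (by omega) hC
    exact ⟨D, hD, hBC.trans hCD⟩

lemma RC.not_mem {x : ℕ × (ℕ → Finset (Finset (Fin N)))} {Q : Finset (Finset (Fin N))}
    (hQ : IsPart univ Q) (h : RC Q x) {l m : ℕ} (hlm : l < m) (hm : m ≤ x.1)
    {B : Finset (Fin N)} (hc : 1 < B.card) (hl : B ∈ x.2 l) (hB : B ∈ x.2 m) : False := by
  obtain ⟨C, hC, hBC⟩ := h.refines (Nat.succ_le_of_lt hlm) hm hB
  obtain ⟨D, hD, hCD⟩ := (h.2.1 l (by omega)).2.2.1 C hC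
  obtain ⟨i, hi⟩ := Finset.card_pos.1 (by omega : 0 < B.card)
  have hDB : D = B := (h.isPart hQ (by omega)).eq_of_mem hD hl (hCD (hBC hi)) hi
  subst hDB
  have : D = C := Subset.antisymm hBC hCD
  subst this
  exact (h.2.1 l (by omega)).2.2.2 D hl hc hC

lemma SplChain.RC_of_reduced (S : SplChain N univ) (hS : S.Reduced) :
    RC {univ} (S.L, S.Λ) := by
  refine ⟨S.first, fun l hl => ⟨?_, S.isPart (Nat.succ_le_of_lt hl), S.refines l hl, ?_⟩,
    S.last, S.trailing⟩
  · intro hb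
    simp only at hl hb
    have key : S.Λ (l + 1) = botP N := by
      apply eq_botP (S.isPart (Nat.succ_le_of_lt hl))
      intro B hB
      obtain ⟨C, hC, hBC⟩ := S.refines l hl B hB
      rw [hb, mem_botP] at hC
      have := Finset.card_le_card hBC
      omega
    exact S.strict l hl (key.trans hb.symm)
  · intro B hB hc hB'
    simp only at hl hB hB'
    have hbr : B ∈ S.branches := S.mem_branches.2 ⟨l, hl, hB, hc⟩
    have h1 := (hS B hbr l hl.le).1 hB
    have h2 := (hS B hbr (l + 1) hl).1 hB'
    omega

def mkChain (hN : (univ : Finset (Fin N)).Nonempty) (x : ℕ × (ℕ → Finset (Finset (Fin N))))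
    (h : RC {univ} x) : SplChain N univ where
  L := x.1
  Λ := x.2
  nonempty_mem l hl := (h.isPart (isPart_self hN) hl).1
  subset_mem l hl := (h.isPart (isPart_self hN) hl).2.1
  cover l hl := (h.isPart (isPart_self hN) hl).2.2
  first := h.1
  last := h.2.2.1
  refines l hl := (h.2.1 l hl).2.2.1
  strict l hl := step_ne (h.isPart (isPart_self hN) hl.le) (h.2.1 l hl).1 (h.2.1 l hl).2
  trailing := h.2.2.2

lemma SplChain.depth_eq (S : SplChain N univ) (hN : (univ : Finset (Fin N)).Nonempty)
    (h : RC {univ} (S.L, S.Λ)) {l : ℕ}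
    (hl : l ≤ S.L) {B : Finset (Fin N)} (hc : 1 < B.card) (hB : B ∈ S.Λ l) : S.depth B = l := by
  have : (Finset.range (S.L + 1)).filter (fun l => B ∈ S.Λ l) = {l} := by
    ext m
    simp only [mem_filter, mem_range, mem_singleton]
    constructor
    · rintro ⟨hm, hBm⟩
      rcases lt_trichotomy l m with hlt | rfl | hlt
      · exact (h.not_mem (isPart_self hN) hlt (by simp only; omega) hc hB hBm).elim
      · rfl
      · exact (h.not_mem (isPart_self hN) hlt hl hc hBm hB).elim
    · rintro rfl
      exact ⟨by omega, hB⟩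
  rw [SplChain.depth, this]
  simp

lemma SplChain.reduced_of_RC (S : SplChain N univ) (hN : (univ : Finset (Fin N)).Nonempty)
    (h : RC {univ} (S.L, S.Λ)) : S.Reduced := by
  intro B hB l hl
  obtain ⟨m, hm, hBm, hc⟩ := S.mem_branches.1 hB
  constructor
  · intro hBl
    exact (S.depth_eq hN h hl hc hBl).symm
  · rintro rfl
    rwa [S.depth_eq hN h hm.le hc hBm]

lemma SplChain.ext' {S T : SplChain N univ} (h : (S.L, S.Λ) = (T.L, T.Λ)) : S = T := by
  cases S; cases T
  simp only [Prod.mk.injEq] at h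
  obtain ⟨rfl, rfl⟩ := h
  rfl

lemma univ_ne_bot (hN : 2 ≤ N) : ({univ} : Finset (Finset (Fin N))) ≠ botP N := by
  intro h
  have : (univ : Finset (Fin N)) ∈ botP N := by rw [← h]; simp
  rw [mem_botP] at this
  simp at this
  omega

lemma steps_top (hN : 2 ≤ N) :
    steps ({univ} : Finset (Finset (Fin N))) = (parts univ).erase {univ} := by
  ext P
  rw [mem_steps, mem_erase, mem_parts]
  constructor
  · rintro ⟨h1, h2, h3⟩
    refine ⟨?_, h1⟩
    rintro rfl
    exact h3 univ (by simp) (by simp; omega) (by simp)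
  · rintro ⟨h1, h2⟩
    refine ⟨h2, fun B _ => ⟨univ, by simp, subset_univ _⟩, ?_⟩
    intro B hB _ hBP
    simp only [mem_singleton] at hB
    subst hB
    exact h1 (h2.eq_single hBP)

/-- the weight of a chain -/
lemma chain_weight (hN : 2 ≤ N) (S : SplChain N univ) (h : RC {univ} (S.L, S.Λ))
    (w : Finset (Fin N) → ℕ → K) (y : ℕ × (ℕ → Finset (Finset (Fin N))))
    (hy : consC {univ} y = (S.L, S.Λ)) :
    S.degree univ = (y.2 0).card ∧ ∏ lam ∈ S.branches.erase univ, w lam (S.degree lam) =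
      ∏ l ∈ range y.1, omg w (y.2 l) (y.2 (l + 1)) := by
  classical
  have hne : (univ : Finset (Fin N)).Nonempty := ⟨⟨0, by omega⟩, mem_univ _⟩
  have hcu : 1 < (univ : Finset (Fin N)).card := by simp; omega
  simp only [consC, Prod.mk.injEq] at hy
  have hL : S.L = y.1 + 1 := hy.1.symm
  have hΛ : ∀ l, S.Λ (l + 1) = y.2 l := fun l => (congrFun hy.2 (l + 1)).symm
  have hmem0 : (univ : Finset (Fin N)) ∈ S.Λ 0 := by rw [S.first]; simp
  constructor
  · rw [SplChain.degree, S.depth_eq hne h (Nat.zero_le _) hcu hmem0, hΛ]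
    congr 1
    exact Finset.filter_true_of_mem fun _ _ => subset_univ _
  · have hbr : S.branches.erase univ =
        (range y.1).biUnion fun l => (y.2 l).filter fun B => 1 < B.card := by
      ext B
      simp only [mem_erase, S.mem_branches, mem_biUnion, mem_range, mem_filter]
      constructor
      · rintro ⟨hB, l, hl, hBl, hc⟩
        cases l with
        | zero => rw [S.first] at hBl; exact absurd (mem_singleton.1 hBl) hB
        | succ l => exact ⟨l, by omega, by rwa [← hΛ], hc⟩
      · rintro ⟨l, hl, hBl, hc⟩
        refine ⟨?_, l + 1, by omega, by rwa [hΛ], hc⟩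
        rintro rfl
        rw [← hΛ] at hBl
        exact h.not_mem (isPart_self hne) (Nat.succ_pos l) (by simp only; omega) hc hmem0 hBl
    rw [hbr, Finset.prod_biUnion]
    · refine Finset.prod_congr rfl fun l hl => ?_
      rw [mem_range] at hl
      rw [omg]
      refine Finset.prod_congr rfl fun B hB => ?_
      rw [mem_filter] at hB
      rw [SplChain.degree, S.depth_eq hne h (l := l + 1) (by omega) hB.2 (by rw [hΛ]; exact hB.1),
        hΛ]
    · intro l hl m hm hlm
      simp only [coe_range, Set.mem_Iio] at hl hm
      rw [Function.onFun, Finset.disjoint_left]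
      intro B h1 h2
      rw [mem_filter] at h1 h2
      rw [← hΛ] at h1 h2
      rcases lt_or_gt_of_ne hlm with h' | h'
      · exact h.not_mem (isPart_self hne) (Nat.succ_lt_succ h') (by simp only; omega) h1.2 h1.1 h2.1
      · exact h.not_mem (isPart_self hne) (Nat.succ_lt_succ h') (by simp only; omega) h1.2 h2.1 h1.1

theorem chain_sum (hN : 2 ≤ N) (w : Finset (Fin N) → ℕ → K) (τ : ℕ → K)
    (V : Finset (Fin N) → K)
    (hV1 : ∀ B : Finset (Fin N), B.card = 1 → V B = 1)
    (hV : ∀ B : Finset (Fin N), 1 < B.card →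
      V B = ∑ P ∈ (parts B).erase {B}, w B P.card * ∏ C ∈ P, V C) :
    ∑ᶠ S ∈ {S : SplChain N Finset.univ | S.Reduced},
      τ (S.degree univ) * ∏ lam ∈ S.branches.erase univ, w lam (S.degree lam) =
    ∑ P ∈ (parts (univ : Finset (Fin N))).erase {univ}, τ P.card * ∏ C ∈ P, V C := by
  classical
  have hne : (univ : Finset (Fin N)).Nonempty := ⟨⟨0, by omega⟩, mem_univ _⟩
  have hex := exists_RC (omg w) (fun Q => ∏ B ∈ Q, V B)
    (Finset.prod_eq_one fun B hB => hV1 B (mem_botP.1 hB))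
    (fun Q hQ _ => prod_step w V hV1 hV hQ)
  choose! F hF hFs using hex
  set G := (steps ({univ} : Finset (Finset (Fin N)))).biUnion F with hG
  have hRC : ∀ x, RC {univ} x ↔ ∃ y ∈ G, consC {univ} y = x := by
    intro x
    rw [RC_step (univ_ne_bot hN)]
    constructor
    · rintro ⟨Q', h1, y, hy, rfl⟩
      exact ⟨y, mem_biUnion.2 ⟨Q', mem_steps.2 h1, (hF Q' h1.1 y).2 hy⟩, rfl⟩
    · rintro ⟨y, hy, rfl⟩
      obtain ⟨Q', h1, hy⟩ := mem_biUnion.1 hy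
      rw [mem_steps] at h1
      exact ⟨Q', h1, y, (hF Q' h1.1 y).1 hy, rfl⟩
  rw [← steps_top hN]
  have hsum : ∑ P ∈ steps ({univ} : Finset (Finset (Fin N))), τ P.card * ∏ C ∈ P, V C =
      ∑ y ∈ G, τ (y.2 0).card * ∏ l ∈ range y.1, omg w (y.2 l) (y.2 (l + 1)) := by
    rw [hG, Finset.sum_biUnion]
    · refine Finset.sum_congr rfl fun Q hQ => ?_
      rw [mem_steps] at hQ
      rw [← hFs Q hQ.1, Finset.mul_sum]
      refine Finset.sum_congr rfl fun y hy => ?_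
      rw [((hF Q hQ.1 y).1 hy).1]
    · intro Q₁ h₁ Q₂ h₂ hne
      rw [Function.onFun, Finset.disjoint_left]
      intro x hx1 hx2
      rw [mem_coe, mem_steps] at h₁ h₂
      exact hne (((hF Q₁ h₁.1 x).1 hx1).1.symm.trans ((hF Q₂ h₂.1 x).1 hx2).1)
  rw [hsum, ← finsum_mem_coe_finset]
  symm
  have hmk : ∀ y, y ∈ G → RC {univ} (consC {univ} y) := fun y hy => (hRC _).2 ⟨y, hy, rfl⟩
  let e : ℕ × (ℕ → Finset (Finset (Fin N))) → SplChain N univ := fun y =>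
    if h : RC {univ} (consC {univ} y) then mkChain hne _ h else
      mkChain hne (consC {univ} (0, fun n => if n = 0 then botP N else ∅)) (by
        rw [RC_step (univ_ne_bot hN)]
        refine ⟨botP N, ⟨isPart_botP, fun B _ => ⟨univ, by simp, subset_univ _⟩, ?_⟩, _,
          (RC_bot _).2 rfl, rfl⟩
        intro B _ hc hb
        rw [mem_botP] at hb
        omega)
  have he : ∀ y ∈ G, ((e y).L, (e y).Λ) = consC {univ} y := by
    intro y hy
    simp only [e, hmk y hy, dif_pos]
    rfl
  refine finsum_mem_eq_of_bijOn e ⟨?_, ?_, ?_⟩ ?_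
  · intro y hy
    exact (e y).reduced_of_RC hne (by rw [he y hy]; exact hmk y hy)
  · intro y hy z hz hyz
    apply consC_inj {univ}
    rw [← he y hy, ← he z hz, hyz]
  · intro S hS
    obtain ⟨y, hy, hyS⟩ := (hRC _).1 (S.RC_of_reduced hS)
    refine ⟨y, hy, SplChain.ext' ?_⟩
    rw [he y hy, hyS]
  · intro y hy
    have := chain_weight hN (e y) (by rw [he y hy]; exact hmk y hy) w y (he y hy).symm
    rw [this.1, this.2]

end Comb2

section Fin
open Finset

variable {N : ℕ} {K : Type*} [Field K]

def prs (I : Finset (Fin N)) : Finset (Fin N × Fin N) :=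
  (pairs N).filter fun q => q.1 ∈ I ∧ q.2 ∈ I

lemma prs_univ : prs (univ : Finset (Fin N)) = pairs N := by simp [prs]

noncomputable def avg {X : Type*} [Fintype X] (f : (Fin N → X) → K) : K :=
  (∑ x, f x) / (Fintype.card X : K) ^ N

lemma avg_const {X : Type*} [Fintype X] [CharZero K] [Nonempty X] (a : K) :
    avg (N := N) (fun _ : Fin N → X => a) = a := by
  have : (Fintype.card X : K) ≠ 0 := by exact_mod_cast Fintype.card_ne_zero
  simp [avg]

lemma avg_mul {X : Type*} [Fintype X] [CharZero K] [Nonempty X] (A : Finset (Fin N))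
    (f g : (Fin N → X) → K)
    (hf : ∀ x y, (∀ i ∈ A, x i = y i) → f x = f y)
    (hg : ∀ x y, (∀ i ∉ A, x i = y i) → g x = g y) :
    avg (fun x => f x * g x) = avg f * avg g := by
  classical
  have hX : (Fintype.card X : K) ≠ 0 := by exact_mod_cast Fintype.card_ne_zero
  have key : (∑ x, f x) * (∑ y, g y) = (Fintype.card X : K) ^ N * ∑ u, f u * g u := by
    rw [Finset.sum_mul_sum, ← Finset.sum_product']
    have h1 : ∑ z ∈ (univ : Finset (Fin N → X)) ×ˢ (univ : Finset (Fin N → X)), f z.1 * g z.2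
        = ∑ z ∈ (univ : Finset (Fin N → X)) ×ˢ (univ : Finset (Fin N → X)), f z.1 * g z.1 := by
      refine Finset.sum_bij' (fun z _ => (A.piecewise z.1 z.2, A.piecewise z.2 z.1))
        (fun z _ => (A.piecewise z.1 z.2, A.piecewise z.2 z.1)) (by simp) (by simp) ?_ ?_ ?_
      · intro z _
        refine Prod.ext (funext fun i => ?_) (funext fun i => ?_) <;>
          by_cases hi : i ∈ A <;> simp [hi]
      · intro z _
        refine Prod.ext (funext fun i => ?_) (funext fun i => ?_) <;>
          by_cases hi : i ∈ A <;> simp [hi]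
      · intro z _
        rw [hf z.1 (A.piecewise z.1 z.2) (fun i hi => by simp [hi]),
          hg z.2 (A.piecewise z.1 z.2) (fun i hi => by simp [hi])]
    rw [h1, Finset.sum_product, Finset.mul_sum]
    refine Finset.sum_congr rfl fun u _ => ?_
    simp
  simp only [avg]
  rw [div_mul_div_comm, key]
  field_simp

lemma avg_prod {X : Type*} [Fintype X] [CharZero K] [Nonempty X]
    (P : Finset (Finset (Fin N))) (hP : ∀ B ∈ P, ∀ C ∈ P, ∀ i, i ∈ B → i ∈ C → B = C)
    (h : Finset (Fin N) → (Fin N → X) → K)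
    (hh : ∀ B ∈ P, ∀ x y, (∀ i ∈ B, x i = y i) → h B x = h B y) :
    avg (fun x => ∏ B ∈ P, h B x) = ∏ B ∈ P, avg (h B) := by
  classical
  induction P using Finset.induction_on with
  | empty => simp [avg_const]
  | insert B P hB ih =>
    simp only [Finset.prod_insert hB]
    rw [avg_mul B (h B) (fun x => ∏ C ∈ P, h C x) (hh B (by simp)), ih]
    · intro C hC D hD
      exact hP C (by simp [hC]) D (by simp [hD])
    · intro C hC
      exact hh C (by simp [hC])
    · intro x y hxy
      refine Finset.prod_congr rfl fun C hC => hh C (by simp [hC]) x y fun i hi => hxy i ?_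
      intro hiB
      have := hP B (by simp) C (by simp [hC]) i hiB hi
      exact hB (this ▸ hC)

variable {A : Type*} [Fintype A] [DecidableEq A]

def kerP (I : Finset (Fin N)) (c : Fin N → A) : Finset (Finset (Fin N)) :=
  I.image fun i => I.filter fun j => c j = c i

lemma isPart_kerP (I : Finset (Fin N)) (c : Fin N → A) : IsPart I (kerP I c) := by
  refine ⟨?_, ?_, ?_⟩
  · intro B hB
    obtain ⟨i, hi, rfl⟩ := mem_image.1 hB
    exact ⟨i, by simp [hi]⟩
  · intro B hB
    obtain ⟨i, hi, rfl⟩ := mem_image.1 hB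
    exact filter_subset _ _
  · intro i hi
    refine ⟨I.filter fun j => c j = c i, ⟨mem_image_of_mem _ hi, by simp [hi]⟩, ?_⟩
    rintro C ⟨hC, hiC⟩
    obtain ⟨k, hk, rfl⟩ := mem_image.1 hC
    simp only [mem_filter] at hiC
    rw [hiC.2]

lemma kerP_block {I : Finset (Fin N)} {c : Fin N → A} {B : Finset (Fin N)} (hB : B ∈ kerP I c)
    {i j : Fin N} (hi : i ∈ B) : j ∈ B ↔ j ∈ I ∧ c j = c i := by
  obtain ⟨k, hk, rfl⟩ := mem_image.1 hB
  simp only [mem_filter] at hi ⊢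
  rw [hi.2]

lemma card_ker (I : Finset (Fin N)) (P : Finset (Finset (Fin N))) (hP : IsPart I P) :
    (univ.filter fun c : Fin N → A => kerP I c = P).card =
      (Fintype.card A).descFactorial P.card * (Fintype.card A) ^ (N - I.card) := by
  classical
  have hex : ∀ i, i ∈ I → ∃ B ∈ P, i ∈ B := fun i hi => hP.exists_mem hi
  choose blk hblk hmem using hex
  let F : (P ↪ A) × (↥(Iᶜ) → A) → (Fin N → A) := fun e i =>
    if h : i ∈ I then e.1 ⟨blk i h, hblk i h⟩ else e.2 ⟨i, by simpa using h⟩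
  have hFI : ∀ e i (h : i ∈ I), F e i = e.1 ⟨blk i h, hblk i h⟩ := fun e i h => by simp [F, h]
  have hFb : ∀ e (B : P) i, i ∈ B.1 → F e i = e.1 B := by
    intro e B i hi
    have h := hP.2.1 B.1 B.2 hi
    rw [hFI e i h]
    congr 1
    exact Subtype.ext (hP.eq_of_mem (hblk i h) B.2 (hmem i h) hi)
  have hinj : Function.Injective F := by
    intro e e' hee
    refine Prod.ext ?_ ?_
    · ext B
      obtain ⟨i, hi⟩ := hP.1 B.1 B.2
      rw [← hFb e B i hi, ← hFb e' B i hi, hee]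
    · funext i
      have h := i.2
      rw [mem_compl] at h
      have := congrFun hee i.1
      simpa [F, h] using this
  have himg : (univ.filter fun c : Fin N → A => kerP I c = P) = univ.image F := by
    ext c
    simp only [mem_filter, mem_univ, true_and, mem_image]
    constructor
    · intro hc
      choose r hr using fun B : P => hP.1 B.1 B.2
      have hker : ∀ B : P, B.1 ∈ kerP I c := fun B => hc ▸ B.2
      refine ⟨(⟨fun B => c (r B), ?_⟩, fun i => c i.1), ?_⟩
      · intro B C hBC
        simp only at hBC
        apply Subtype.ext
        refine hP.eq_of_mem B.2 C.2 (i := r C) ?_ (hr C)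
        rw [kerP_block (hker B) (hr B)]
        exact ⟨hP.2.1 C.1 C.2 (hr C), hBC.symm⟩
      · funext i
        by_cases hi : i ∈ I
        · rw [hFI _ i hi]
          exact ((kerP_block (hker ⟨blk i hi, hblk i hi⟩) (hmem i hi)).1 (hr _)).2
        · simp [F, hi]
    · rintro ⟨e, rfl⟩
      have hcl : ∀ i (hi : i ∈ I), (I.filter fun j => F e j = F e i) = blk i hi := by
        intro i hi
        ext j
        simp only [mem_filter]
        constructor
        · rintro ⟨hj, hji⟩
          rw [hFI e j hj, hFI e i hi] at hji
          have := congrArg Subtype.val (e.1.injective hji)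
          simp only at this
          rw [← this]
          exact hmem j hj
        · intro hj
          refine ⟨hP.2.1 _ (hblk i hi) hj, ?_⟩
          rw [hFb e ⟨blk i hi, hblk i hi⟩ j hj, hFb e ⟨blk i hi, hblk i hi⟩ i (hmem i hi)]
      ext B
      constructor
      · intro hB
        obtain ⟨i, hi, rfl⟩ := mem_image.1 hB
        rw [hcl i hi]
        exact hblk i hi
      · intro hB
        obtain ⟨i, hi⟩ := hP.1 B hB
        have hiI := hP.2.1 B hB hi
        refine mem_image.2 ⟨i, hiI, ?_⟩
        rw [hcl i hiI]
        exact hP.eq_of_mem (hblk i hiI) hB (hmem i hiI) hi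
  rw [himg, Finset.card_image_of_injective _ hinj, Finset.card_univ, Fintype.card_prod,
    Fintype.card_embedding_eq, Fintype.card_fun]
  simp [Finset.card_compl]

lemma prod_ker (I : Finset (Fin N)) (c : Fin N → A) (g : Fin N × Fin N → K) :
    ∏ q ∈ prs I, (if c q.1 = c q.2 then g q else 1) = ∏ B ∈ kerP I c, ∏ q ∈ prs B, g q := by
  classical
  rw [← Finset.prod_filter, ← Finset.prod_biUnion]
  · refine Finset.prod_congr ?_ fun _ _ => rfl
    ext q
    simp only [prs, mem_filter, mem_biUnion]
    constructor
    · rintro ⟨⟨h1, h2, h3⟩, h4⟩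
      obtain ⟨B, hB, hi⟩ := (isPart_kerP I c).exists_mem h2
      exact ⟨B, hB, h1, hi, (kerP_block hB hi).2 ⟨h3, h4.symm⟩⟩
    · rintro ⟨B, hB, h1, h2, h3⟩
      have h4 := (kerP_block hB h2).1 h3
      exact ⟨⟨h1, (isPart_kerP I c).2.1 B hB h2, h4.1⟩, h4.2.symm⟩
  · intro B hB C hC hne
    rw [Function.onFun, Finset.disjoint_left]
    intro q h1 h2
    simp only [prs, mem_filter] at h1 h2
    exact hne ((isPart_kerP I c).eq_of_mem hB hC h1.2.1 h2.2.1)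

/-- the main finite recurrence -/
lemma avg_rec {X : Type*} [Fintype X] [Nonempty X] [Nonempty A] [CharZero K]
    (I : Finset (Fin N))
    (t : Fin N × Fin N → K) (k : Fin N × Fin N → X → X → K) :
    avg (fun x : Fin N → A × X => ∏ q ∈ prs I,
      if (x q.1).1 = (x q.2).1 then t q * k q (x q.1).2 (x q.2).2 else 1) =
    ∑ P ∈ parts I, (((Fintype.card A).descFactorial P.card : K) / (Fintype.card A : K) ^ I.card) *
      ∏ B ∈ P, ((∏ q ∈ prs B, t q) *
        avg (fun x : Fin N → X => ∏ q ∈ prs B, k q (x q.1) (x q.2))) := by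
  classical
  have hX : (Fintype.card X : K) ≠ 0 := by exact_mod_cast Fintype.card_ne_zero
  have hA : (Fintype.card A : K) ≠ 0 := by exact_mod_cast Fintype.card_ne_zero
  set G : Finset (Finset (Fin N)) → K := fun P => ∏ B ∈ P, ((∏ q ∈ prs B, t q) *
        avg (fun x : Fin N → X => ∏ q ∈ prs B, k q (x q.1) (x q.2))) with hG
  have h1 : ∀ c : Fin N → A, avg (fun y : Fin N → X => ∏ q ∈ prs I,
      if c q.1 = c q.2 then t q * k q (y q.1) (y q.2) else 1) = G (kerP I c) := by
    intro c
    simp only [prod_ker I c (fun q => t q * k q _ _)]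
    rw [avg_prod (kerP I c)
      (fun B hB C hC i hi hj => (isPart_kerP I c).eq_of_mem hB hC hi hj)
      (fun B (y : Fin N → X) => ∏ q ∈ prs B, (t q * k q (y q.1) (y q.2)))]
    · rw [hG]
      refine Finset.prod_congr rfl fun B _ => ?_
      simp only [Finset.prod_mul_distrib, avg]
      rw [← Finset.mul_sum, mul_div_assoc]
    · intro B _ x y hxy
      refine Finset.prod_congr rfl fun q hq => ?_
      simp only [prs, mem_filter] at hq
      rw [hxy _ hq.2.1, hxy _ hq.2.2]
  have h2 : avg (fun x : Fin N → A × X => ∏ q ∈ prs I,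
      if (x q.1).1 = (x q.2).1 then t q * k q (x q.1).2 (x q.2).2 else 1) =
      (∑ c : Fin N → A, G (kerP I c)) / (Fintype.card A : K) ^ N := by
    simp only [← h1, avg]
    rw [← Finset.sum_div, ← Fintype.sum_prod_type', Fintype.card_prod, Nat.cast_mul, mul_pow,
      div_div, mul_comm ((Fintype.card A : K) ^ N)]
    congr 1
    exact Fintype.sum_equiv (Equiv.arrowProdEquivProdArrow (Fin N) (fun _ => A) (fun _ => X)) _ _ (fun x => rfl)
  rw [h2, ← Finset.sum_fiberwise_of_maps_to (s := univ) (t := parts I) (g := kerP I)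
    (fun c _ => mem_parts.2 (isPart_kerP I c)), Finset.sum_div]
  refine Finset.sum_congr rfl fun P hP => ?_
  rw [Finset.sum_congr rfl (g := fun _ => G P)
    (fun c hc => by rw [(mem_filter.1 hc).2]), Finset.sum_const,
    card_ker I P (mem_parts.1 hP), nsmul_eq_mul]
  have hI : I.card ≤ N := by simpa using Finset.card_le_univ I
  have : (Fintype.card A : K) ^ N = (Fintype.card A : K) ^ I.card *
      (Fintype.card A : K) ^ (N - I.card) := by
    rw [← pow_add]; congr 1; omega
  rw [this]
  push_cast
  field_simp
  rw [hG]

variable (p : ℕ)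

def Wd : ℕ → Type
  | 0 => Unit
  | n + 1 => Fin p × Wd n

noncomputable instance instFintypeWd : (n : ℕ) → Fintype (Wd p n)
  | 0 => inferInstanceAs (Fintype Unit)
  | n + 1 => letI := instFintypeWd n; inferInstanceAs (Fintype (Fin p × Wd p n))

instance instNonemptyWd [NeZero p] : (n : ℕ) → Nonempty (Wd p n)
  | 0 => inferInstanceAs (Nonempty Unit)
  | n + 1 => letI := instNonemptyWd n; inferInstanceAs (Nonempty (Fin p × Wd p n))

lemma card_Wd (n : ℕ) : Fintype.card (Wd p n) = p ^ n := by
  induction n with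
  | zero => exact Fintype.card_unit
  | succ n ih =>
    have : Fintype.card (Wd p (n + 1)) = Fintype.card (Fin p × Wd p n) := rfl
    rw [this, Fintype.card_prod, ih, Fintype.card_fin, pow_succ, mul_comm]

def kap (t : K) : (n : ℕ) → Wd p n → Wd p n → K
  | 0, _, _ => 0
  | n + 1, u, v => if u.1 = v.1 then t * kap t n u.2 v.2 else 1

noncomputable def vv (t : Fin N × Fin N → K) (n : ℕ) (I : Finset (Fin N)) : K :=
  (∏ q ∈ prs I, t q) *
    avg (fun x : Fin N → Wd p n => ∏ q ∈ prs I, kap p (t q) n (x q.1) (x q.2))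

def kapT (t : K) (n : ℕ) (u v : Option (Fin p) × Wd p n) : K :=
  if u.1 = v.1 then t * kap p t n u.2 v.2 else 1

noncomputable def topv (t : Fin N × Fin N → K) (n : ℕ) : K :=
  avg (fun x : Fin N → Option (Fin p) × Wd p n => ∏ q ∈ pairs N, kapT p (t q) n (x q.1) (x q.2))

lemma vv_succ [NeZero p] [CharZero K] (t : Fin N × Fin N → K) (n : ℕ) (I : Finset (Fin N)) :
    vv p t (n + 1) I = (∏ q ∈ prs I, t q) * ∑ P ∈ parts I,
      ((p.descFactorial P.card : K) / (p : K) ^ I.card) * ∏ B ∈ P, vv p t n B := by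
  have := avg_rec (A := Fin p) (X := Wd p n) I t (fun q => kap p (t q) n)
  rw [Fintype.card_fin] at this
  rw [vv]
  congr 1

lemma topv_eq [NeZero p] [CharZero K] (t : Fin N × Fin N → K) (n : ℕ) :
    topv p t n = ∑ P ∈ parts (univ : Finset (Fin N)),
      (((p + 1).descFactorial P.card : K) / ((p : K) + 1) ^ N) * ∏ B ∈ P, vv p t n B := by
  have := avg_rec (A := Option (Fin p)) (X := Wd p n) univ t (fun q => kap p (t q) n)
  rw [Fintype.card_option, Fintype.card_fin, prs_univ, Finset.card_univ, Fintype.card_fin] at this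
  push_cast at this
  exact this

lemma vv_one [NeZero p] [CharZero K] (t : Fin N × Fin N → K) (n : ℕ) (I : Finset (Fin N))
    (hI : I.card = 1) : vv p t n I = 1 := by
  obtain ⟨i, rfl⟩ := Finset.card_eq_one.1 hI
  have : prs ({i} : Finset (Fin N)) = ∅ := by
    ext q
    simp only [prs, pairs, mem_filter, mem_univ, true_and, mem_singleton, notMem_empty, iff_false]
    rintro ⟨h1, h2, h3⟩
    rw [h2, h3] at h1
    exact lt_irrefl _ h1
  rw [vv, this]
  simp [avg_const]

end Fin

section Lim
open Finset Filter Topology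

variable {N : ℕ}

lemma lin_rec {K : Type*} [NormedField K] (a b : ℕ → K) (c β : K) (hc : ‖c‖ < 1)
    (hb : Tendsto b atTop (𝓝 β)) (ha : ∀ n, a (n + 1) = c * (a n + b n)) :
    Tendsto a atTop (𝓝 (c * β / (1 - c))) := by
  have hc1 : (1 - c) ≠ 0 := by
    intro h
    have : c = 1 := (sub_eq_zero.1 h).symm
    rw [this, norm_one] at hc
    exact lt_irrefl _ hc
  set L := c * β / (1 - c) with hL
  have hLe : L = c * (L + β) := by
    rw [hL]; field_simp; ring
  have hu : ∀ n, ‖a (n + 1) - L‖ ≤ ‖c‖ * ‖a n - L‖ + ‖b n - β‖ := by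
    intro n
    have : a (n + 1) - L = c * (a n - L) + c * (b n - β) := by
      rw [ha n]; nth_rewrite 1 [hLe]; ring
    rw [this]
    refine (norm_add_le _ _).trans ?_
    rw [norm_mul, norm_mul]
    gcongr
    exact mul_le_of_le_one_left (norm_nonneg _) hc.le
  rw [tendsto_iff_norm_sub_tendsto_zero] at hb ⊢
  rw [Metric.tendsto_atTop] at hb ⊢
  intro ε hε
  have hpos : 0 < 1 - ‖c‖ := by linarith
  obtain ⟨n₀, hn₀⟩ := hb (ε / 2 * (1 - ‖c‖)) (by positivity)
  have hk : ∀ k, ‖a (n₀ + k) - L‖ ≤ ‖c‖ ^ k * ‖a n₀ - L‖ + ε / 2 := by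
    intro k
    induction k with
    | zero => simp; linarith
    | succ k ih =>
      have h1 := hu (n₀ + k)
      have h2 := hn₀ (n₀ + k) (by omega)
      rw [Real.dist_eq, sub_zero, abs_of_nonneg (norm_nonneg _)] at h2
      rw [← add_assoc]
      calc ‖a (n₀ + k + 1) - L‖ ≤ ‖c‖ * ‖a (n₀ + k) - L‖ + ‖b (n₀ + k) - β‖ := h1
        _ ≤ ‖c‖ * (‖c‖ ^ k * ‖a n₀ - L‖ + ε / 2) + ε / 2 * (1 - ‖c‖) := by
            gcongr
        _ = ‖c‖ ^ (k + 1) * ‖a n₀ - L‖ + ε / 2 := by ring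
  have h0 : Tendsto (fun k => ‖c‖ ^ k * ‖a n₀ - L‖) atTop (𝓝 0) := by
    simpa using (tendsto_pow_atTop_nhds_zero_of_lt_one (norm_nonneg c) hc).mul_const ‖a n₀ - L‖
  obtain ⟨k₀, hk₀⟩ := (Metric.tendsto_atTop.1 h0) (ε / 2) (by positivity)
  refine ⟨n₀ + k₀, fun n hn => ?_⟩
  obtain ⟨k, rfl⟩ := Nat.exists_eq_add_of_le (show n₀ ≤ n by omega)
  have h3 := hk₀ k (by omega)
  rw [Real.dist_eq, sub_zero, abs_of_nonneg (by positivity)] at h3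
  rw [Real.dist_eq, sub_zero, abs_of_nonneg (norm_nonneg _)]
  linarith [hk k]

noncomputable def cc {K : Type*} [Field K] (p : ℕ) (t : Fin N × Fin N → K) (I : Finset (Fin N)) : K :=
  (∏ q ∈ prs I, t q) / (p : K) ^ (I.card - 1)

lemma desc_succ {p : ℕ} (hp : p ≠ 0) {d : ℕ} (hd : 0 < d) :
    p.descFactorial d = p * (p - 1).descFactorial (d - 1) := by
  obtain ⟨m, rfl⟩ := Nat.exists_eq_succ_of_ne_zero hp
  obtain ⟨e, rfl⟩ := Nat.exists_eq_succ_of_ne_zero hd.ne'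
  exact Nat.succ_descFactorial_succ _ _

lemma vv_rec {K : Type*} [Field K] [CharZero K] (p : ℕ) [NeZero p] (t : Fin N × Fin N → K)
    (n : ℕ) {I : Finset (Fin N)} (hI : I.Nonempty) :
    vv p t (n + 1) I = cc p t I * (vv p t n I + ∑ P ∈ (parts I).erase {I},
      ((p - 1).descFactorial (P.card - 1) : K) * ∏ B ∈ P, vv p t n B) := by
  have hp : (p : K) ≠ 0 := by exact_mod_cast NeZero.ne p
  have h1 : ∀ P ∈ parts I, ((p.descFactorial P.card : K) / (p : K) ^ I.card) *
      ∏ B ∈ P, vv p t n B = (1 / (p : K) ^ (I.card - 1)) *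
        (((p - 1).descFactorial (P.card - 1) : K) * ∏ B ∈ P, vv p t n B) := by
    intro P hP
    have hc := (mem_parts.1 hP).card_pos hI
    rw [desc_succ (NeZero.ne p) hc]
    obtain ⟨m, hm⟩ := Nat.exists_eq_succ_of_ne_zero (Finset.card_pos.2 hI).ne'
    rw [hm]
    simp only [Nat.succ_eq_add_one, Nat.add_sub_cancel, pow_succ]
    push_cast
    field_simp
  rw [vv_succ, Finset.sum_congr rfl h1, ← Finset.mul_sum, cc,
    ← Finset.add_sum_erase _ _ (mem_parts.2 (isPart_self hI))]
  simp only [Finset.card_singleton, Nat.sub_self, Nat.descFactorial_zero, Nat.cast_one, one_mul,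
    Finset.prod_singleton]
  ring

lemma vv_tendsto {K : Type*} [NormedField K] [CharZero K] (p : ℕ) [NeZero p]
    (t : Fin N × Fin N → K)
    (hc : ∀ I : Finset (Fin N), 1 < I.card → ‖cc p t I‖ < 1) :
    ∃ V : Finset (Fin N) → K, ∀ I : Finset (Fin N), I.Nonempty →
      Tendsto (fun n => vv p t n I) atTop (𝓝 (V I)) := by
  have : ∀ I : Finset (Fin N), ∃ v : K, I.Nonempty →
      Tendsto (fun n => vv p t n I) atTop (𝓝 v) := by
    intro I
    induction hm : I.card using Nat.strong_induction_on generalizing I with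
    | _ m ih =>
    by_cases hI : I.Nonempty
    swap
    · exact ⟨0, fun h => absurd h hI⟩
    by_cases h1 : 1 < I.card
    · have hV : ∀ B : Finset (Fin N), ∃ v : K, B.card < m → B.Nonempty →
          Tendsto (fun n => vv p t n B) atTop (𝓝 v) := by
        intro B
        by_cases hB : B.card < m
        · obtain ⟨v, hv⟩ := ih _ hB B rfl
          exact ⟨v, fun _ => hv⟩
        · exact ⟨0, fun h => absurd h hB⟩
      choose V hV using hV
      refine ⟨_, fun _ => lin_rec (fun n => vv p t n I) (fun n => ∑ P ∈ (parts I).erase {I},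
        ((p - 1).descFactorial (P.card - 1) : K) * ∏ B ∈ P, vv p t n B) (cc p t I)
        (∑ P ∈ (parts I).erase {I},
        ((p - 1).descFactorial (P.card - 1) : K) * ∏ B ∈ P, V B) (hc I h1) ?_
        (fun n => vv_rec p t n hI)⟩
      refine tendsto_finsetSum _ fun P hP => Tendsto.const_mul _ ?_
      rw [mem_erase, mem_parts] at hP
      exact tendsto_finsetProd _ fun B hB => hV B (hm ▸ hP.2.card_lt hP.1 hB) (hP.2.1 B hB)
    · have : I.card = 1 := by
        have := Finset.card_pos.2 hI
        omega
      refine ⟨1, fun _ => ?_⟩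
      simp only [vv_one p t _ I this]
      exact tendsto_const_nhds
  choose V hV using this
  exact ⟨V, hV⟩

lemma V_rec {K : Type*} [NormedField K] [CharZero K] (p : ℕ) [NeZero p]
    (t : Fin N × Fin N → K) (ht : ∀ q, t q ≠ 0)
    (hc : ∀ I : Finset (Fin N), 1 < I.card → ‖cc p t I‖ < 1)
    (V : Finset (Fin N) → K) (hV : ∀ I : Finset (Fin N), I.Nonempty →
      Tendsto (fun n => vv p t n I) atTop (𝓝 (V I))) (I : Finset (Fin N)) (hI : 1 < I.card) :
    V I = ∑ P ∈ (parts I).erase {I},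
      (((p - 1).descFactorial (P.card - 1) : K) / ((cc p t I)⁻¹ - 1)) * ∏ B ∈ P, V B := by
  have hp : (p : K) ≠ 0 := by exact_mod_cast NeZero.ne p
  have hne : I.Nonempty := Finset.card_pos.1 (by omega)
  have hc0 : cc p t I ≠ 0 := by
    rw [cc]
    exact div_ne_zero (Finset.prod_ne_zero_iff.2 fun q _ => ht q) (pow_ne_zero _ hp)
  have hc1 : cc p t I ≠ 1 := by
    intro h
    have := hc I hI
    rw [h, norm_one] at this
    exact lt_irrefl _ this
  have hlim : V I = cc p t I * (V I + ∑ P ∈ (parts I).erase {I},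
      ((p - 1).descFactorial (P.card - 1) : K) * ∏ B ∈ P, V B) := by
    refine tendsto_nhds_unique ((tendsto_add_atTop_iff_nat 1).2 (hV I hne)) ?_
    simp only [vv_rec p t _ hne]
    refine Tendsto.const_mul _ ((hV I hne).add ?_)
    refine tendsto_finsetSum _ fun P hP => Tendsto.const_mul _ ?_
    rw [mem_erase, mem_parts] at hP
    exact tendsto_finsetProd _ fun B hB => hV B (hP.2.1 B hB)
  have h3 : ∀ P : Finset (Finset (Fin N)),
      (((p - 1).descFactorial (P.card - 1) : K) / ((cc p t I)⁻¹ - 1)) * ∏ B ∈ P, V B =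
      (((p - 1).descFactorial (P.card - 1) : K) * ∏ B ∈ P, V B) / ((cc p t I)⁻¹ - 1) := by
    intro P; ring
  simp only [h3]
  rw [← Finset.sum_div]
  have h4 : (cc p t I)⁻¹ - 1 ≠ 0 := by
    intro h
    exact hc1 (inv_eq_one.1 (sub_eq_zero.1 h))
  rw [eq_div_iff h4]
  generalize cc p t I = c at *
  generalize (∑ P ∈ (parts I).erase {I},
      ((p - 1).descFactorial (P.card - 1) : K) * ∏ B ∈ P, V B) = sg at *
  have h5 : V I * (c⁻¹ - 1) = c⁻¹ * V I - V I := by ring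
  rw [h5]
  nth_rewrite 1 [hlim]
  rw [inv_mul_cancel_left₀ hc0]
  ring

lemma top_limit {K : Type*} [NormedField K] [CharZero K] (p : ℕ) [NeZero p]
    (hN : 2 ≤ N)
    (t : Fin N × Fin N → K) (ht : ∀ q, t q ≠ 0)
    (hc : ∀ I : Finset (Fin N), 1 < I.card → ‖cc p t I‖ < 1)
    (V : Finset (Fin N) → K) (hV : ∀ I : Finset (Fin N), I.Nonempty →
      Tendsto (fun n => vv p t n I) atTop (𝓝 (V I))) :
    Tendsto (fun n => topv p t n) atTop (𝓝 ((1 / ((p : K) + 1) ^ (N - 1)) *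
      ∑ P ∈ (parts (univ : Finset (Fin N))).erase {univ},
        (((p : K) * (cc p t univ)⁻¹ + 1 - (P.card : K)) *
          ((p - 1).descFactorial (P.card - 2) : K) / ((cc p t univ)⁻¹ - 1)) * ∏ B ∈ P, V B)) := by
  have hp1 : (p : K) + 1 ≠ 0 := by exact_mod_cast Nat.succ_ne_zero p
  have hne : (univ : Finset (Fin N)).Nonempty := ⟨⟨0, by omega⟩, mem_univ _⟩
  have hcu : 1 < (univ : Finset (Fin N)).card := by simp; omega
  have hc1 : cc p t univ ≠ 1 := by
    intro h
    have := hc univ hcu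
    rw [h, norm_one] at this
    exact lt_irrefl _ this
  have h4 : (cc p t univ)⁻¹ - 1 ≠ 0 := by
    intro h
    exact hc1 (inv_eq_one.1 (sub_eq_zero.1 h))
  have hlim : Tendsto (fun n => topv p t n) atTop (𝓝 (∑ P ∈ parts (univ : Finset (Fin N)),
      (((p + 1).descFactorial P.card : K) / ((p : K) + 1) ^ N) * ∏ B ∈ P, V B)) := by
    simp only [topv_eq]
    refine tendsto_finsetSum _ fun P hP => Tendsto.const_mul _ ?_
    rw [mem_parts] at hP
    exact tendsto_finsetProd _ fun B hB => hV B (hP.1 B hB)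
  convert hlim using 2
  have hNp : ((p : K) + 1) ^ N = ((p : K) + 1) ^ (N - 1) * ((p : K) + 1) := by
    rw [← pow_succ]; congr 1; omega
  rw [← Finset.add_sum_erase _ _ (mem_parts.2 (isPart_self hne))]
  simp only [Finset.card_singleton, Nat.descFactorial_one, Finset.prod_singleton]
  rw [V_rec p t ht hc V hV univ hcu, Finset.mul_sum, Finset.mul_sum, ← Finset.sum_add_distrib]
  refine Finset.sum_congr rfl fun P hP => ?_
  rw [mem_erase, mem_parts] at hP
  have hd := hP.2.two_le_card hne hP.1
  obtain ⟨d, hd⟩ := Nat.exists_eq_add_of_le hd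
  rw [hd, hNp]
  have e1 : (p + 1).descFactorial (2 + d) = (p + 1) * (p * (p - 1).descFactorial d) := by
    have a1 : p.succ - 1 = p := rfl
    have a2 : 2 + d - 1 - 1 = d := by omega
    rw [desc_succ (Nat.succ_ne_zero p) (by omega), a1,
      desc_succ (NeZero.ne p) (by omega), a2]
  have e2 : (((p - 1).descFactorial (2 + d - 1) : ℕ) : K) =
      ((p : K) - 1 - d) * (((p - 1).descFactorial d : ℕ) : K) := by
    have : 2 + d - 1 = d + 1 := by omega
    rw [this, Nat.descFactorial_succ]
    push_cast
    by_cases hdp : d ≤ p - 1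
    · rw [Nat.cast_sub hdp, Nat.cast_sub (Nat.one_le_iff_ne_zero.2 (NeZero.ne p))]
      push_cast
      ring
    · rw [Nat.descFactorial_of_lt (not_le.1 hdp)]
      simp
  have e3 : 2 + d - 2 = d := by omega
  rw [e1, e2, e3]
  push_cast
  generalize (cc p t univ)⁻¹ = c at *
  field_simp
  ring

/-! divergence -/

lemma kap_nonneg (p : ℕ) {t : ℝ} (ht : 0 ≤ t) (n : ℕ) (u v : Wd p n) : 0 ≤ kap p t n u v := by
  induction n with
  | zero => exact le_rfl
  | succ n ih =>
    rw [kap]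
    split_ifs
    · exact mul_nonneg ht (ih _ _)
    · exact zero_le_one

lemma vv_nonneg (p : ℕ) {t : Fin N × Fin N → ℝ} (ht : ∀ q, 0 < t q) (n : ℕ)
    (I : Finset (Fin N)) : 0 ≤ vv p t n I := by
  refine mul_nonneg (Finset.prod_nonneg fun q _ => (ht q).le) ?_
  refine div_nonneg (Finset.sum_nonneg fun x _ => Finset.prod_nonneg fun q _ =>
    kap_nonneg p (ht q).le n _ _) (by positivity)

lemma cc_pos (p : ℕ) [NeZero p] {t : Fin N × Fin N → ℝ} (ht : ∀ q, 0 < t q)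
    (I : Finset (Fin N)) : 0 < cc p t I := by
  have : 0 < (p : ℝ) := by exact_mod_cast Nat.pos_of_ne_zero (NeZero.ne p)
  exact div_pos (Finset.prod_pos fun q _ => ht q) (by positivity)

/-- one step lower bound -/
lemma vv_step (p : ℕ) [NeZero p] (hp : 2 ≤ p) {t : Fin N × Fin N → ℝ} (ht : ∀ q, 0 < t q)
    (n : ℕ) {I : Finset (Fin N)} {i : Fin N} (hi : i ∈ I) (hI : 1 < I.card) :
    cc p t I * (vv p t n I + vv p t n (I \ {i})) ≤ vv p t (n + 1) I := by
  have hne : I.Nonempty := ⟨i, hi⟩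
  rw [vv_rec p t n hne]
  have hne2 : (I \ {i}).Nonempty := by
    rw [← Finset.card_pos, Finset.card_sdiff_of_subset (by simpa using hi)]
    simp; omega
  have hpart := isPart_pair (I := I) (B := {i}) (by simpa using hi) (by simp) hne2
  have hne3 : ({i} : Finset (Fin N)) ≠ I \ {i} := by
    intro h
    have : i ∈ I \ {i} := by rw [← h]; simp
    simp at this
  have hcard : ({{i}, I \ {i}} : Finset (Finset (Fin N))).card = 2 := Finset.card_pair hne3
  have hmem : ({{i}, I \ {i}} : Finset (Finset (Fin N))) ∈ (parts I).erase {I} := by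
    rw [mem_erase, mem_parts]
    refine ⟨?_, hpart⟩
    intro h
    rw [h] at hcard
    simp at hcard
  refine mul_le_mul_of_nonneg_left (add_le_add_right ?_ _) (cc_pos p ht I).le
  have hle := Finset.single_le_sum (f := fun P : Finset (Finset (Fin N)) =>
    ((p - 1).descFactorial (P.card - 1) : ℝ) * ∏ B ∈ P, vv p t n B)
    (fun P _ => mul_nonneg (Nat.cast_nonneg _)
      (Finset.prod_nonneg fun B _ => vv_nonneg p ht n B)) hmem
  refine le_trans ?_ hle
  simp only [hcard, Finset.prod_pair hne3]
  rw [vv_one p t n {i} (by simp), one_mul]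
  have : (1 : ℝ) ≤ ((p - 1).descFactorial (2 - 1) : ℝ) := by
    simp only [Nat.add_one_sub_one, Nat.descFactorial_one]
    exact_mod_cast (by omega : 1 ≤ p - 1)
  exact le_mul_of_one_le_left (vv_nonneg p ht n _) this

lemma vv_lower (p : ℕ) [NeZero p] (hp : 2 ≤ p) {t : Fin N × Fin N → ℝ} (ht : ∀ q, 0 < t q)
    (I : Finset (Fin N)) (hI : I.Nonempty) : ∃ δ > 0, ∃ n₀, ∀ n ≥ n₀, δ ≤ vv p t n I := by
  induction hm : I.card using Nat.strong_induction_on generalizing I with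
  | _ m ih =>
  by_cases h1 : 1 < I.card
  · obtain ⟨i, hi⟩ := hI
    have hc : (I \ {i}).card = I.card - 1 := by
      rw [Finset.card_sdiff_of_subset (by simpa using hi)]; simp
    obtain ⟨δ, hδ, n₀, hn₀⟩ := ih (I \ {i}).card (by omega) _ (Finset.card_pos.1 (by omega)) rfl
    refine ⟨cc p t I * δ, mul_pos (cc_pos p ht I) hδ, n₀ + 1, fun n hn => ?_⟩
    obtain ⟨k, rfl⟩ := Nat.exists_eq_add_of_le (show 1 ≤ n by omega)
    rw [add_comm 1 k]
    refine le_trans ?_ (vv_step p hp ht k hi h1)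
    refine mul_le_mul_of_nonneg_left ?_ (cc_pos p ht I).le
    have := hn₀ k (by omega)
    have := vv_nonneg p ht k I
    linarith
  · have : I.card = 1 := by
      have := Finset.card_pos.2 hI
      omega
    exact ⟨1, one_pos, 0, fun n _ => (vv_one p t n I this).ge⟩

lemma vv_unbounded (p : ℕ) [NeZero p] (hp : 2 ≤ p) {t : Fin N × Fin N → ℝ} (ht : ∀ q, 0 < t q)
    (I : Finset (Fin N)) (hI : 1 < I.card) (hc : 1 ≤ cc p t I) (C : ℝ) (n₁ : ℕ) :
    ∃ n ≥ n₁, C ≤ vv p t n I := by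
  obtain ⟨i, hi⟩ := Finset.card_pos.1 (by omega : 0 < I.card)
  have hcd : (I \ {i}).card = I.card - 1 := by
    rw [Finset.card_sdiff_of_subset (by simpa using hi)]; simp
  obtain ⟨δ, hδ, n₀, hn₀⟩ := vv_lower p hp ht (I \ {i}) (Finset.card_pos.1 (by omega))
  have hk : ∀ k : ℕ, k * δ ≤ vv p t (n₀ + n₁ + k) I := by
    intro k
    induction k with
    | zero => simpa using vv_nonneg p ht _ I
    | succ k ih =>
      have h1 := vv_step p hp ht (n₀ + n₁ + k) hi hI
      have h2 := hn₀ (n₀ + n₁ + k) (by omega)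
      have h3 := vv_nonneg p ht (n₀ + n₁ + k) I
      rw [← add_assoc]
      push_cast
      nlinarith
  obtain ⟨k, hk'⟩ := exists_nat_ge (C / δ)
  refine ⟨n₀ + n₁ + k, by omega, le_trans ?_ (hk k)⟩
  rwa [div_le_iff₀ hδ] at hk'

lemma top_bounded (p : ℕ) [NeZero p] (hp : 2 ≤ p) (hN : 2 ≤ N) {t : Fin N × Fin N → ℝ}
    (ht : ∀ q, 0 < t q) (C : ℝ) (hC : ∀ n, topv p t n ≤ C) (I : Finset (Fin N))
    (hI : 1 < I.card) : cc p t I < 1 := by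
  by_contra hcon
  push Not at hcon
  have hp0 : (0 : ℝ) < (p : ℝ) + 1 := by positivity
  have hne : (univ : Finset (Fin N)).Nonempty := ⟨⟨0, by omega⟩, mem_univ _⟩
  have hIne : I.Nonempty := Finset.card_pos.1 (by omega)
  have hterm : ∀ P ∈ parts (univ : Finset (Fin N)), ∀ n,
      (((p + 1).descFactorial P.card : ℝ) / ((p : ℝ) + 1) ^ N) * ∏ B ∈ P, vv p t n B ≤ C := by
    intro P hP n
    refine le_trans ?_ (hC n)
    rw [topv_eq]
    exact Finset.single_le_sum (f := fun P : Finset (Finset (Fin N)) =>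
      (((p + 1).descFactorial P.card : ℝ) / ((p : ℝ) + 1) ^ N) * ∏ B ∈ P, vv p t n B)
      (fun P _ => mul_nonneg (by positivity)
        (Finset.prod_nonneg fun B _ => vv_nonneg p ht n B)) hP
  have key : ∃ a > 0, ∃ n₁, ∀ n ≥ n₁, a * vv p t n I ≤ C := by
    by_cases hIu : I = univ
    · subst hIu
      refine ⟨((p : ℝ) + 1) / ((p : ℝ) + 1) ^ N, by positivity, 0, fun n _ => ?_⟩
      have := hterm {univ} (mem_parts.2 (isPart_self hne)) n
      simpa using this
    · have hne2 : (univ \ I).Nonempty := by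
        rw [Finset.sdiff_nonempty]
        intro h
        exact hIu (Finset.eq_univ_iff_forall.2 fun x => h (mem_univ x))
      obtain ⟨δ, hδ, n₀, hn₀⟩ := vv_lower p hp ht (univ \ I) hne2
      have hne3 : I ≠ univ \ I := by
        intro h
        obtain ⟨i, hi⟩ := hIne
        have : i ∈ univ \ I := by rw [← h]; exact hi
        simp [hi] at this
      have hcard : ({I, univ \ I} : Finset (Finset (Fin N))).card = 2 := Finset.card_pair hne3
      have hdp : (0 : ℝ) < ((p + 1).descFactorial 2 : ℝ) := by
        have := Nat.pow_sub_lt_descFactorial (n := p + 1) (k := 2) (by omega) (by omega)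
        exact_mod_cast (by omega : 0 < (p + 1).descFactorial 2)
      refine ⟨((p + 1).descFactorial 2 : ℝ) / ((p : ℝ) + 1) ^ N * δ, by positivity, n₀,
        fun n hn => ?_⟩
      have := hterm {I, univ \ I} (mem_parts.2 (isPart_pair (subset_univ I) hIne hne2)) n
      rw [hcard, Finset.prod_pair hne3] at this
      refine le_trans ?_ this
      rw [mul_assoc]
      refine mul_le_mul_of_nonneg_left ?_ (by positivity)
      rw [mul_comm]
      exact mul_le_mul_of_nonneg_left (hn₀ n hn) (vv_nonneg p ht n I)
  obtain ⟨a, ha, n₁, hn₁⟩ := key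
  obtain ⟨n, hn, hCn⟩ := vv_unbounded p hp ht I hI hcon (C / a + 1) n₁
  have h1 := hn₁ n hn
  have h2 : a * (C / a + 1) ≤ a * vv p t n I := mul_le_mul_of_nonneg_left hCn ha.le
  rw [mul_add, mul_div_cancel₀ _ ha.ne'] at h2
  linarith

end Lim

section Meas
open Finset Filter Topology

variable {N : ℕ} {Ω : Type*} [MeasurableSpace Ω] (ν : Measure Ω) [IsProbabilityMeasure ν]

lemma comp_eq_sum {X : Type*} [Fintype X] (D : Ω → X) {E : Type*} [AddCommMonoid E]
    (F : (Fin N → X) → E) (x : Fin N → Ω) :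
    F (fun i => D (x i)) =
      ∑ a : Fin N → X, (Set.univ.pi fun i => D ⁻¹' {a i}).indicator (fun _ => F a) x := by
  classical
  rw [Finset.sum_eq_single (fun i => D (x i))]
  · rw [Set.indicator_of_mem]
    intro i _
    rfl
  · intro b _ hb
    rw [Set.indicator_of_notMem]
    intro h
    apply hb
    funext i
    exact (h i (Set.mem_univ i)).symm
  · simp

lemma comp_meas {X : Type*} [Fintype X] (D : Ω → X) (hD : ∀ a, MeasurableSet (D ⁻¹' {a}))
    (F : (Fin N → X) → ℂ) : Measurable (fun x : Fin N → Ω => F (fun i => D (x i))) := by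
  simp only [comp_eq_sum D F]
  refine Finset.measurable_sum _ fun a _ => Measurable.indicator measurable_const ?_
  exact MeasurableSet.univ_pi fun i => hD _

lemma pi_real {X : Type*} [Fintype X] (D : Ω → X)
    (hm : ∀ a, ν (D ⁻¹' {a}) = ((Fintype.card X : ENNReal))⁻¹) (a : Fin N → X) :
    (Measure.pi fun _ : Fin N => ν) (Set.univ.pi fun i => D ⁻¹' {a i}) =
      ((Fintype.card X : ENNReal) ^ N)⁻¹ := by
  rw [Measure.pi_pi]
  simp [hm, ENNReal.inv_pow]

lemma comp_int {X : Type*} [Fintype X] (D : Ω → X) (hD : ∀ a, MeasurableSet (D ⁻¹' {a}))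
    (hm : ∀ a, ν (D ⁻¹' {a}) = ((Fintype.card X : ENNReal))⁻¹)
    {E : Type*} [RCLike E] (F : (Fin N → X) → E) :
    Integrable (fun x : Fin N → Ω => F (fun i => D (x i))) (Measure.pi fun _ => ν) ∧
    ∫ x : Fin N → Ω, F (fun i => D (x i)) ∂(Measure.pi fun _ => ν) = avg F := by
  simp only [comp_eq_sum D F]
  have hms : ∀ a : Fin N → X, MeasurableSet (Set.univ.pi fun i => D ⁻¹' {a i}) :=
    fun a => MeasurableSet.univ_pi fun i => hD _
  have hi : ∀ a : Fin N → X, Integrable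
      ((Set.univ.pi fun i => D ⁻¹' {a i}).indicator (fun _ : Fin N → Ω => F a))
      (Measure.pi fun _ => ν) := fun a => (integrable_const _).indicator (hms a)
  refine ⟨integrable_finset_sum _ fun a _ => hi a, ?_⟩
  rw [integral_finset_sum _ fun a _ => hi a, avg, Finset.sum_div]
  refine Finset.sum_congr rfl fun a _ => ?_
  rw [integral_indicator_const _ (hms a), measureReal_def, pi_real ν D hm]
  rw [RCLike.real_smul_eq_coe_mul]
  simp
  ring

lemma kap_norm (p : ℕ) (t : ℂ) (n : ℕ) (u v : Wd p n) : ‖kap p t n u v‖ = kap p ‖t‖ n u v := by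
  induction n with
  | zero => simp [kap]
  | succ n ih =>
    rw [kap, kap]
    split_ifs
    · rw [norm_mul, ih]
    · simp

lemma kapT_norm (p : ℕ) (t : ℂ) (n : ℕ) (u v : Option (Fin p) × Wd p n) :
    ‖kapT p t n u v‖ = kapT p ‖t‖ n u v := by
  rw [kapT, kapT]
  split_ifs
  · rw [norm_mul, kap_norm]
  · simp

theorem meas_main (p : ℕ) [NeZero p] (hp : 2 ≤ p) (hN : 2 ≤ N) (d : Ω → Ω → ℝ)
    (hd : ∀ x y, 0 ≤ d x y) (D : ∀ n, Ω → Option (Fin p) × Wd p n)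
    (hD : ∀ n a, MeasurableSet (D n ⁻¹' {a}))
    (hm : ∀ n a, ν (D n ⁻¹' {a}) = ((Fintype.card (Option (Fin p) × Wd p n) : ENNReal))⁻¹)
    (hDd : ∀ n x y, d x y = 0 → D n x = D n y)
    (s : Fin N → Fin N → ℂ)
    (hk : ∀ (z : ℂ) n x y, kapT p ((p : ℂ) ^ (-z)) n (D n x) (D n y) =
      if d x y ≤ ((p : ℝ) ^ (n + 1))⁻¹ then 0 else ((d x y : ℝ) : ℂ) ^ z)
    (t : Fin N × Fin N → ℂ) (ht : ∀ q, t q = (p : ℂ) ^ (-s q.1 q.2)) :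
    (Integrable (fun x : Fin N → Ω => ∏ q ∈ pairs N, ((d (x q.1) (x q.2) : ℝ) : ℂ) ^ s q.1 q.2)
      (Measure.pi fun _ => ν) ↔ ∀ I : Finset (Fin N), 1 < I.card → ‖cc p t I‖ < 1) ∧
    ((∀ I : Finset (Fin N), 1 < I.card → ‖cc p t I‖ < 1) →
      Tendsto (fun n => topv p t n) atTop (𝓝
      (∫ x : Fin N → Ω, ∏ q ∈ pairs N, ((d (x q.1) (x q.2) : ℝ) : ℂ) ^ s q.1 q.2
        ∂(Measure.pi fun _ => ν)))) := by
  have hp0 : (p : ℂ) ≠ 0 := by exact_mod_cast NeZero.ne p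
  have ht0 : ∀ q, t q ≠ 0 := fun q => by rw [ht]; simp [Complex.cpow_eq_zero_iff, hp0]
  set f : (Fin N → Ω) → ℂ :=
    fun x => ∏ q ∈ pairs N, ((d (x q.1) (x q.2) : ℝ) : ℂ) ^ s q.1 q.2 with hf
  set H : ∀ n, (Fin N → Option (Fin p) × Wd p n) → ℂ :=
    fun n a => ∏ q ∈ pairs N, kapT p (t q) n (a q.1) (a q.2) with hH
  set G : ℕ → (Fin N → Ω) → ℂ := fun n x => H n (fun i => D n (x i)) with hG
  set μ := (Measure.pi fun _ : Fin N => ν) with hμ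
  have hGm : ∀ n, Measurable (G n) := fun n => comp_meas (D n) (hD n) (H n)
  have hGi : ∀ n, Integrable (G n) μ := fun n => (comp_int ν (D n) (hD n) (hm n) (H n)).1
  have hGint : ∀ n, ∫ x, G n x ∂μ = topv p t n :=
    fun n => (comp_int ν (D n) (hD n) (hm n) (H n)).2
  have hHn : ∀ n a, ‖H n a‖ = ∏ q ∈ pairs N, kapT p ‖t q‖ n (a q.1) (a q.2) := by
    intro n a
    rw [hH, norm_prod]
    exact Finset.prod_congr rfl fun q _ => kapT_norm _ _ _ _ _
  have hGn : ∀ n, ∫ x, ‖G n x‖ ∂μ = topv p (fun q => ‖t q‖) n := by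
    intro n
    have := (comp_int ν (D n) (hD n) (hm n) (fun a => ‖H n a‖)).2
    rw [hG]
    simp only
    rw [this]
    rw [topv]
    congr 1
    funext a
    exact hHn n a
  have hGv : ∀ n x, G n x = ∏ q ∈ pairs N,
      if d (x q.1) (x q.2) ≤ ((p : ℝ) ^ (n + 1))⁻¹ then 0 else
        ((d (x q.1) (x q.2) : ℝ) : ℂ) ^ s q.1 q.2 := by
    intro n x
    refine Finset.prod_congr rfl fun q _ => ?_
    simp only [ht]
    exact hk _ _ _ _
  have hle : ∀ n x, ‖G n x‖ ≤ ‖f x‖ := by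
    intro n x
    rw [hGv, hf, norm_prod, norm_prod]
    refine Finset.prod_le_prod (fun _ _ => norm_nonneg _) fun q _ => ?_
    split_ifs
    · simp
    · exact le_rfl
  -- diagonals
  have hp1 : (1 : ℝ) < p := by exact_mod_cast hp
  have hcard : ∀ n, Fintype.card (Option (Fin p) × Wd p n) = (p + 1) * p ^ n := by
    intro n
    rw [Fintype.card_prod, Fintype.card_option, Fintype.card_fin, card_Wd]
  have hdiag : ∀ q ∈ pairs N, μ {x | d (x q.1) (x q.2) = 0} = 0 := by
    intro q hq
    have hqne : q.1 ≠ q.2 := by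
      simp only [pairs, mem_filter] at hq
      exact hq.2.ne
    have hb : ∀ n, μ {x | d (x q.1) (x q.2) = 0} ≤
        (((p + 1) * p ^ n : ℕ) : ENNReal)⁻¹ := by
      intro n
      set X := Option (Fin p) × Wd p n
      let R : X → Set (Fin N → Ω) := fun a => Set.univ.pi fun i =>
        if i = q.1 ∨ i = q.2 then D n ⁻¹' {a} else Set.univ
      have hsub : {x : Fin N → Ω | d (x q.1) (x q.2) = 0} ⊆ ⋃ a ∈ (univ : Finset X), R a := by
        intro x hx
        simp only [mem_univ, Set.iUnion_true, Set.mem_iUnion]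
        refine ⟨D n (x q.1), fun i _ => ?_⟩
        dsimp only
        split_ifs with h
        · rcases h with rfl | rfl
          · rfl
          · exact (hDd n _ _ hx).symm
        · trivial
      refine (measure_mono hsub).trans ((measure_biUnion_finset_le _ _).trans ?_)
      have hR : ∀ a, μ (R a) = ((Fintype.card X : ENNReal)⁻¹) ^ 2 := by
        intro a
        rw [hμ, Measure.pi_pi]
        have : ∀ i, ν (if i = q.1 ∨ i = q.2 then D n ⁻¹' {a} else Set.univ) =
            if i ∈ ({q.1, q.2} : Finset (Fin N)) then (Fintype.card X : ENNReal)⁻¹ else 1 := by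
          intro i
          simp only [Finset.mem_insert, Finset.mem_singleton]
          split_ifs
          · exact hm n a
          · simp
        simp only [this]
        rw [Finset.prod_ite_mem, Finset.univ_inter, Finset.prod_const, Finset.card_pair hqne]
      simp only [hR]
      rw [Finset.sum_const, nsmul_eq_mul, Finset.card_univ, hcard n, sq, ← mul_assoc,
        ENNReal.mul_inv_cancel, one_mul]
      · have : (p + 1) * p ^ n ≠ 0 := mul_ne_zero (Nat.succ_ne_zero _) (pow_ne_zero _ (NeZero.ne p))
        exact_mod_cast this
      · exact ENNReal.natCast_ne_top _
    have hlim : Tendsto (fun n => (((p + 1) * p ^ n : ℕ) : ENNReal)⁻¹) atTop (𝓝 0) := by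
      have h1 : Tendsto (fun n : ℕ => (p + 1) * p ^ n) atTop atTop := by
        refine Filter.tendsto_atTop_mono (fun n => ?_) tendsto_id
        calc n ≤ p ^ n := (Nat.lt_pow_self hp).le
          _ ≤ (p + 1) * p ^ n := Nat.le_mul_of_pos_left _ (Nat.succ_pos _)
      exact ENNReal.tendsto_inv_nat_nhds_zero.comp h1
    exact le_antisymm (ge_of_tendsto' hlim hb) zero_le
  have hae : ∀ᵐ x ∂μ, ∀ q ∈ pairs N, 0 < d (x q.1) (x q.2) := by
    rw [Filter.eventually_all_finset]
    intro q hq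
    have := hdiag q hq
    rw [ae_iff]
    refine measure_mono_null (fun x hx => ?_) this
    exact le_antisymm (not_lt.1 hx) (hd _ _)
  have hpt : ∀ᵐ x ∂μ, Tendsto (fun n => G n x) atTop (𝓝 (f x)) := by
    filter_upwards [hae] with x hx
    simp only [hGv]
    refine tendsto_finsetProd _ fun q hq => ?_
    have hl : Tendsto (fun n : ℕ => ((p : ℝ) ^ (n + 1))⁻¹) atTop (𝓝 0) :=
      ((tendsto_pow_atTop_atTop_of_one_lt hp1).comp (tendsto_add_atTop_nat 1)).inv_tendsto_atTop
    refine tendsto_const_nhds.congr' ?_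
    filter_upwards [hl.eventually (gt_mem_nhds (hx q hq))] with n hn
    rw [if_neg (not_le.2 hn)]
  have hfm : AEStronglyMeasurable f μ :=
    aestronglyMeasurable_of_tendsto_ae atTop (fun n => (hGm n).aestronglyMeasurable) hpt
  have hccn : ∀ I, ‖cc p t I‖ = cc p (fun q => ‖t q‖) I := by
    intro I
    simp [cc]
  have hfwd : (∀ I : Finset (Fin N), 1 < I.card → ‖cc p t I‖ < 1) → Integrable f μ := by
    intro hc
    have hc' : ∀ I : Finset (Fin N), 1 < I.card → ‖cc p (fun q => ‖t q‖) I‖ < 1 := by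
      intro I hI
      rw [← hccn, norm_norm]; exact hc I hI
    obtain ⟨V, hV⟩ := vv_tendsto p (fun q => ‖t q‖) hc'
    have hT := top_limit p hN (fun q => ‖t q‖) (fun q => norm_ne_zero_iff.2 (ht0 q)) hc' V hV
    obtain ⟨C, hC⟩ := hT.bddAbove_range
    refine ⟨hfm, ?_⟩
    rw [hasFiniteIntegral_iff_norm]
    have hC' : ∀ n, ∫⁻ x, ENNReal.ofReal ‖G n x‖ ∂μ ≤ ENNReal.ofReal C := by
      intro n
      rw [← ofReal_integral_eq_lintegral_ofReal (hGi n).norm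
        (ae_of_all _ fun x => norm_nonneg _), hGn]
      exact ENNReal.ofReal_le_ofReal (hC ⟨n, rfl⟩)
    calc ∫⁻ x, ENNReal.ofReal ‖f x‖ ∂μ
        = ∫⁻ x, liminf (fun n => ENNReal.ofReal ‖G n x‖) atTop ∂μ := by
          refine lintegral_congr_ae ?_
          filter_upwards [hpt] with x hx
          exact ((ENNReal.continuous_ofReal.tendsto _).comp hx.norm).liminf_eq.symm
      _ ≤ liminf (fun n => ∫⁻ x, ENNReal.ofReal ‖G n x‖ ∂μ) atTop :=
          lintegral_liminf_le fun n => (hGm n).norm.ennreal_ofReal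
      _ ≤ liminf (fun n : ℕ => ENNReal.ofReal C) atTop :=
          liminf_le_liminf (Eventually.of_forall hC')
      _ = ENNReal.ofReal C := by simp
      _ < ⊤ := ENNReal.ofReal_lt_top
  refine ⟨⟨fun hint I hI => ?_, hfwd⟩, fun hc => ?_⟩
  · rw [hccn]
    refine top_bounded p hp hN (fun q => norm_pos_iff.2 (ht0 q)) (∫ x, ‖f x‖ ∂μ) (fun n => ?_) I hI
    rw [← hGn]
    exact integral_mono (hGi n).norm hint.norm (hle n)
  · have := tendsto_integral_of_dominated_convergence (fun x => ‖f x‖)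
      (fun n => (hGm n).aestronglyMeasurable) (hfwd hc).norm
      (fun n => ae_of_all _ (hle n)) hpt
    simpa only [hGint] using this

end Meas

section Dig

variable (p : ℕ) [hpf : Fact p.Prime]

noncomputable def dg (c : Fin p × ℤ_[p]) : ℤ_[p] := ((c.1 : ℕ) : ℤ_[p]) + p * c.2

lemma dg_surj (z : ℤ_[p]) : ∃ c, dg p c = z := by
  have h := PadicInt.sub_zmodRepr_mem z
  rw [PadicInt.maximalIdeal_eq_span_p, Ideal.mem_span_singleton] at h
  obtain ⟨u, hu⟩ := h
  refine ⟨(⟨z.zmodRepr, PadicInt.zmodRepr_lt_p z⟩, u), ?_⟩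
  simp only [dg]
  rw [← hu]; ring

lemma dg_norm (c c' : Fin p × ℤ_[p]) :
    ‖dg p c - dg p c'‖ = if c.1 = c'.1 then (p : ℝ)⁻¹ * ‖c.2 - c'.2‖ else 1 := by
  split_ifs with h
  · have : dg p c - dg p c' = p * (c.2 - c'.2) := by
      simp only [dg, h]; ring
    rw [this, norm_mul, PadicInt.norm_p]
  · refine le_antisymm (PadicInt.norm_le_one _) (not_lt.1 fun hlt => h ?_)
    have h1 : ‖(((c.1 : ℤ) - (c'.1 : ℤ) : ℤ) : ℤ_[p])‖ < 1 := by
      rw [PadicInt.norm_lt_one_iff_dvd] at hlt ⊢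
      have : (((c.1 : ℤ) - (c'.1 : ℤ) : ℤ) : ℤ_[p]) = (dg p c - dg p c') - p * (c.2 - c'.2) := by
        simp only [dg]; push_cast; ring
      rw [this]
      exact dvd_sub hlt (dvd_mul_right _ _)
    rw [PadicInt.norm_int_lt_one_iff_dvd] at h1
    have h2 := Int.eq_zero_of_abs_lt_dvd h1 (by
      have a1 := c.1.2
      have a2 := c'.1.2
      rw [abs_lt]; constructor <;> omega)
    apply Fin.ext
    omega

lemma p_pos : (0 : ℝ) < p := by exact_mod_cast hpf.out.pos
lemma one_lt_p : (1 : ℝ) < p := by exact_mod_cast hpf.out.one_lt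

lemma dg_inj {c c' : Fin p × ℤ_[p]} (h : dg p c = dg p c') : c = c' := by
  have := dg_norm p c c'
  rw [h, sub_self, norm_zero] at this
  split_ifs at this with h1
  · refine Prod.ext h1 ?_
    have hp := p_pos p
    have : ‖c.2 - c'.2‖ = 0 := by
      rcases mul_eq_zero.1 this.symm with h | h
      · exact absurd h (by positivity)
      · exact h
    exact sub_eq_zero.1 (norm_eq_zero.1 this)
  · exact absurd this (by norm_num)

noncomputable def ud (z : ℤ_[p]) : Fin p × ℤ_[p] := (dg_surj p z).choose

lemma dg_ud (z : ℤ_[p]) : dg p (ud p z) = z := (dg_surj p z).choose_spec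
lemma ud_dg (c) : ud p (dg p c) = c := dg_inj p (dg_ud p _)

lemma ud_norm (x y : ℤ_[p]) :
    ‖x - y‖ = if (ud p x).1 = (ud p y).1 then (p : ℝ)⁻¹ * ‖(ud p x).2 - (ud p y).2‖ else 1 := by
  rw [← dg_norm, dg_ud, dg_ud]

noncomputable def wd : ∀ n, ℤ_[p] → Wd p n
  | 0, _ => ()
  | n + 1, z => ((ud p z).1, wd n (ud p z).2)

lemma wd_surj (n : ℕ) (w : Wd p n) : ∃ z, wd p n z = w := by
  induction n with
  | zero => exact ⟨0, rfl⟩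
  | succ n ih =>
    obtain ⟨z, hz⟩ := ih w.2
    refine ⟨dg p (w.1, z), ?_⟩
    rw [wd, ud_dg, hz]
    rfl

lemma inv_pow_iff (n : ℕ) (r : ℝ) : (p : ℝ)⁻¹ * r ≤ ((p : ℝ) ^ (n + 1))⁻¹ ↔ r ≤ ((p : ℝ) ^ n)⁻¹ := by
  have hp := p_pos p
  rw [pow_succ, mul_inv, mul_comm ((p : ℝ) ^ n)⁻¹]
  exact mul_le_mul_iff_right₀ (by positivity)

lemma not_one_le (n : ℕ) : ¬ (1 : ℝ) ≤ ((p : ℝ) ^ (n + 1))⁻¹ := by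
  rw [not_le]
  exact inv_lt_one_of_one_lt₀ (one_lt_pow₀ (one_lt_p p) (by omega))

lemma wd_eq (n : ℕ) (x y : ℤ_[p]) : wd p n x = wd p n y ↔ ‖x - y‖ ≤ ((p : ℝ) ^ n)⁻¹ := by
  induction n generalizing x y with
  | zero =>
    refine ⟨fun _ => ?_, fun _ => rfl⟩
    simpa using PadicInt.norm_le_one (x - y)
  | succ n ih =>
    have : wd p (n + 1) x = wd p (n + 1) y ↔ (ud p x).1 = (ud p y).1 ∧
        wd p n (ud p x).2 = wd p n (ud p y).2 := Prod.mk_inj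
    rw [this, ih, ud_norm p x y]
    split_ifs with h
    · rw [inv_pow_iff]; simp [h]
    · simp only [h, false_and, false_iff]; exact not_one_le p n

lemma scale_cpow (z : ℂ) (r : ℝ) (hr : 0 ≤ r) :
    (((p : ℝ)⁻¹ * r : ℝ) : ℂ) ^ z = (p : ℂ) ^ (-z) * (r : ℂ) ^ z := by
  have hp := p_pos p
  rw [Complex.ofReal_mul, Complex.mul_cpow_ofReal_nonneg (by positivity) hr]
  congr 1
  rw [Complex.cpow_neg, Complex.ofReal_inv, Complex.inv_cpow]
  · simp
  · rw [Complex.ofReal_natCast, Complex.natCast_arg]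
    exact Real.pi_pos.ne

lemma kap_wd (z : ℂ) (n : ℕ) (x y : ℤ_[p]) :
    kap p ((p : ℂ) ^ (-z)) n (wd p n x) (wd p n y) =
      if ‖x - y‖ ≤ ((p : ℝ) ^ n)⁻¹ then 0 else ((‖x - y‖ : ℝ) : ℂ) ^ z := by
  induction n generalizing x y with
  | zero =>
    rw [if_pos (by simpa using PadicInt.norm_le_one (x - y))]; rfl
  | succ n ih =>
    rw [kap, wd, wd]
    simp only
    rw [ih, ud_norm p x y]
    by_cases h : (ud p x).1 = (ud p y).1
    · simp only [if_pos h, inv_pow_iff]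
      split_ifs
      · simp
      · rw [scale_cpow p z _ (norm_nonneg _)]
    · simp only [if_neg h, if_neg (not_one_le p n)]
      simp

end Dig

section Proj

variable (p : ℕ) [hpf : Fact p.Prime]

noncomputable def mx (v : Fin 2 → ℚ_[p]) : ℝ := max ‖v 0‖ ‖v 1‖

lemma mx_nonneg (v) : 0 ≤ mx p v := le_max_of_le_left (norm_nonneg _)

lemma mx_eq_zero {v} : mx p v = 0 ↔ v = 0 := by
  constructor
  · intro h
    have h0 : ‖v 0‖ ≤ 0 := h ▸ le_max_left _ _
    have h1 : ‖v 1‖ ≤ 0 := h ▸ le_max_right _ _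
    funext i
    fin_cases i
    · exact norm_le_zero_iff.1 h0
    · exact norm_le_zero_iff.1 h1
  · rintro rfl; simp [mx]

lemma mx_smul (a : ℚ_[p]) (v) : mx p (a • v) = ‖a‖ * mx p v := by
  simp only [mx, Pi.smul_apply, smul_eq_mul, norm_mul]
  rw [mul_max_of_nonneg _ _ (norm_nonneg _)]

lemma sdelta_def (v w) : sdelta p v w = ‖v 0 * w 1 - v 1 * w 0‖ / (mx p v * mx p w) := rfl

lemma sdelta_smul {a b : ℚ_[p]} (ha : a ≠ 0) (hb : b ≠ 0) (v w) :
    sdelta p (a • v) (b • w) = sdelta p v w := by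
  rw [sdelta_def, sdelta_def, mx_smul, mx_smul]
  have : (a • v) 0 * (b • w) 1 - (a • v) 1 * (b • w) 0 = (a * b) * (v 0 * w 1 - v 1 * w 0) := by
    simp only [Pi.smul_apply, smul_eq_mul]; ring
  rw [this, norm_mul, norm_mul]
  have ha' : ‖a‖ ≠ 0 := norm_ne_zero_iff.2 ha
  have hb' : ‖b‖ ≠ 0 := norm_ne_zero_iff.2 hb
  rw [show ‖a‖ * mx p v * (‖b‖ * mx p w) = (‖a‖ * ‖b‖) * (mx p v * mx p w) by ring]
  exact mul_div_mul_left _ _ (mul_ne_zero ha' hb')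

lemma rep_mk (v : Fin 2 → ℚ_[p]) (hv : v ≠ 0) :
    ∃ a : ℚ_[p], a ≠ 0 ∧ a • v = (Projectivization.mk ℚ_[p] v hv).rep := by
  obtain ⟨a, ha⟩ := Projectivization.exists_smul_eq_mk_rep ℚ_[p] v hv
  exact ⟨a, a.ne_zero, ha⟩

lemma pdelta_mk (v w : Fin 2 → ℚ_[p]) (hv : v ≠ 0) (hw : w ≠ 0) :
    pdelta p (Projectivization.mk ℚ_[p] v hv) (Projectivization.mk ℚ_[p] w hw) =
      sdelta p v w := by
  obtain ⟨a, ha, hav⟩ := rep_mk p v hv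
  obtain ⟨b, hb, hbv⟩ := rep_mk p w hw
  rw [pdelta, ← hav, ← hbv, sdelta_smul p ha hb]

lemma mulVec0 (A : Matrix (Fin 2) (Fin 2) ℚ_[p]) (v) : A.mulVec v 0 = A 0 0 * v 0 + A 0 1 * v 1 := by
  simp [Matrix.mulVec, dotProduct]
lemma mulVec1 (A : Matrix (Fin 2) (Fin 2) ℚ_[p]) (v) : A.mulVec v 1 = A 1 0 * v 0 + A 1 1 * v 1 := by
  simp [Matrix.mulVec, dotProduct]

lemma lin_le (a b x y : ℚ_[p]) (ha : ‖a‖ ≤ 1) (hb : ‖b‖ ≤ 1) : ‖a * x + b * y‖ ≤ max ‖x‖ ‖y‖ := by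
  refine (Padic.nonarchimedean _ _).trans (max_le_max ?_ ?_)
  · rw [norm_mul]; exact mul_le_of_le_one_left (norm_nonneg _) ha
  · rw [norm_mul]; exact mul_le_of_le_one_left (norm_nonneg _) hb

lemma mx_mulVec (A : Matrix (Fin 2) (Fin 2) ℚ_[p]) (hA : ∀ i j, ‖A i j‖ ≤ 1) (hd : ‖A.det‖ = 1) (v) :
    mx p (A.mulVec v) = mx p v := by
  refine le_antisymm ?_ ?_
  · rw [mx, mulVec0, mulVec1]
    exact max_le (lin_le p _ _ _ _ (hA _ _) (hA _ _)) (lin_le p _ _ _ _ (hA _ _) (hA _ _))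
  · have h := mx_smul p A.det v
    rw [hd, one_mul] at h
    rw [← h]
    have h0 : (A.det • v) 0 = A 1 1 * A.mulVec v 0 + (-A 0 1) * A.mulVec v 1 := by
      rw [Pi.smul_apply, smul_eq_mul, Matrix.det_fin_two, mulVec0, mulVec1]; ring
    have h1 : (A.det • v) 1 = (-A 1 0) * A.mulVec v 0 + A 0 0 * A.mulVec v 1 := by
      rw [Pi.smul_apply, smul_eq_mul, Matrix.det_fin_two, mulVec0, mulVec1]; ring
    rw [mx, h0, h1]
    exact max_le (lin_le p _ _ _ _ (hA _ _) (by rw [norm_neg]; exact hA _ _))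
      (lin_le p _ _ _ _ (by rw [norm_neg]; exact hA _ _) (hA _ _))

lemma mulVec_ne (A : Matrix (Fin 2) (Fin 2) ℚ_[p]) (hA : ∀ i j, ‖A i j‖ ≤ 1) (hd : ‖A.det‖ = 1) {v}
    (hv : v ≠ 0) : A.mulVec v ≠ 0 := by
  intro h
  rw [← mx_eq_zero, mx_mulVec p A hA hd, mx_eq_zero] at h
  exact hv h

lemma sdelta_mulVec (A : Matrix (Fin 2) (Fin 2) ℚ_[p]) (hA : ∀ i j, ‖A i j‖ ≤ 1)
    (hd : ‖A.det‖ = 1) (v w) : sdelta p (A.mulVec v) (A.mulVec w) = sdelta p v w := by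
  rw [sdelta_def, sdelta_def, mx_mulVec p A hA hd, mx_mulVec p A hA hd]
  congr 1
  have : A.mulVec v 0 * A.mulVec w 1 - A.mulVec v 1 * A.mulVec w 0 =
      A.det * (v 0 * w 1 - v 1 * w 0) := by
    rw [Matrix.det_fin_two, mulVec0, mulVec1, mulVec0, mulVec1]; ring
  rw [this, norm_mul, hd, one_mul]

lemma pdelta_mobius (A : Matrix (Fin 2) (Fin 2) ℚ_[p]) (hA : ∀ i j, ‖A i j‖ ≤ 1)
    (hd : ‖A.det‖ = 1) (ξ η : P1 p) : pdelta p (mobius p A ξ) (mobius p A η) = pdelta p ξ η := by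
  rw [mobius, mobius, dif_pos (mulVec_ne p A hA hd ξ.rep_nonzero),
    dif_pos (mulVec_ne p A hA hd η.rep_nonzero), pdelta_mk, sdelta_mulVec p A hA hd, pdelta]

lemma mobius_mk (A : Matrix (Fin 2) (Fin 2) ℚ_[p]) (hA : ∀ i j, ‖A i j‖ ≤ 1)
    (hd : ‖A.det‖ = 1) (v w : Fin 2 → ℚ_[p]) (hv : v ≠ 0) (hw : w ≠ 0) (h : A.mulVec v = w) :
    mobius p A (Projectivization.mk ℚ_[p] v hv) = Projectivization.mk ℚ_[p] w hw := by
  rw [mobius, dif_pos (mulVec_ne p A hA hd (Projectivization.rep_nonzero _))]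
  obtain ⟨a, ha, hav⟩ := rep_mk p v hv
  rw [Projectivization.mk_eq_mk_iff']
  refine ⟨a, ?_⟩
  rw [← hav, Matrix.mulVec_smul, h]

lemma isClosed_ball (ξ : P1 p) (r : ℝ) : IsClosed {η : P1 p | pdelta p ξ η ≤ r} := by
  have hq : Topology.IsQuotientMap
      (fun v : {v : Fin 2 → ℚ_[p] // v ≠ 0} => (Projectivization.mk ℚ_[p] v.1 v.2 : P1 p)) :=
    isQuotientMap_quotient_mk'
  rw [← hq.isClosed_preimage]
  have : ((fun v : {v : Fin 2 → ℚ_[p] // v ≠ 0} => (Projectivization.mk ℚ_[p] v.1 v.2 : P1 p)) ⁻¹'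
      {η : P1 p | pdelta p ξ η ≤ r}) = {v | sdelta p ξ.rep v.1 ≤ r} := by
    ext v
    simp only [Set.mem_preimage, Set.mem_ofPred_eq]
    rw [← pdelta_mk p _ _ ξ.rep_nonzero v.2, Projectivization.mk_rep]
  rw [this]
  refine isClosed_le ?_ continuous_const
  simp only [sdelta_def]
  have c0 : Continuous fun v : {v : Fin 2 → ℚ_[p] // v ≠ 0} => v.1 0 :=
    (continuous_apply 0).comp continuous_subtype_val
  have c1 : Continuous fun v : {v : Fin 2 → ℚ_[p] // v ≠ 0} => v.1 1 :=
    (continuous_apply 1).comp continuous_subtype_val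
  refine Continuous.div ?_ ?_ ?_
  · exact ((continuous_const.mul c1).sub (continuous_const.mul c0)).norm
  · exact continuous_const.mul (c0.norm.max c1.norm)
  · intro v
    exact mul_ne_zero (fun h => ξ.rep_nonzero ((mx_eq_zero p).1 h)) (fun h => v.2 ((mx_eq_zero p).1 h))

lemma ball_le (ν : Measure (P1 p)) (hν : IsGLInvariant p ν) (A : Matrix (Fin 2) (Fin 2) ℚ_[p])
    (hA : ∀ i j, ‖A i j‖ ≤ 1) (hd : ‖A.det‖ = 1) (ξ η : P1 p) (h : mobius p A ξ = η) (r : ℝ) :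
    ν {x | pdelta p ξ x ≤ r} ≤ ν {x | pdelta p η x ≤ r} := by
  rw [← hν A hA hd _ (isClosed_ball p ξ r).measurableSet]
  refine measure_mono ?_
  rintro _ ⟨x, hx, rfl⟩
  rw [Set.mem_ofPred_eq, ← h, pdelta_mobius p A hA hd]
  exact hx

noncomputable def vec : Option (Fin p) × ℤ_[p] → Fin 2 → ℚ_[p]
  | (some a, u) => ![((dg p (a, u) : ℤ_[p]) : ℚ_[p]), 1]
  | (none, u) => ![1, (((p : ℤ_[p]) * u : ℤ_[p]) : ℚ_[p])]

lemma mx_vec (c) : mx p (vec p c) = 1 := by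
  obtain ⟨a | a, u⟩ := c
  · have := PadicInt.norm_le_one ((p : ℤ_[p]) * u)
    rw [PadicInt.norm_def] at this
    simp only [mx, vec, Matrix.cons_val_zero, Matrix.cons_val_one, norm_one]
    exact max_eq_left this
  · have := PadicInt.norm_le_one (dg p (a, u))
    rw [PadicInt.norm_def] at this
    simp only [mx, vec, Matrix.cons_val_zero, Matrix.cons_val_one, norm_one]
    exact max_eq_right this

lemma vec_ne (c) : vec p c ≠ 0 := by
  intro h
  have := mx_vec p c
  rw [h, (mx_eq_zero p).2 rfl] at this
  exact zero_ne_one this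

lemma norm_pu (u : ℤ_[p]) : ‖(p : ℤ_[p]) * u‖ < 1 :=
  (PadicInt.norm_lt_one_iff_dvd _).2 (dvd_mul_right _ _)

lemma norm_one_sub (z : ℤ_[p]) (hz : ‖z‖ < 1) : ‖1 - z‖ = 1 := by
  refine le_antisymm (PadicInt.norm_le_one _) (not_lt.1 fun hlt => ?_)
  have h := PadicInt.nonarchimedean (1 - z) z
  rw [sub_add_cancel, norm_one] at h
  exact absurd (max_lt hlt hz) (not_lt.2 h)

lemma sdelta_vec (c c') : sdelta p (vec p c) (vec p c') =
    if c.1 = c'.1 then (p : ℝ)⁻¹ * ‖c.2 - c'.2‖ else 1 := by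
  rw [sdelta_def, mx_vec, mx_vec, mul_one, div_one]
  obtain ⟨a | a, u⟩ := c <;> obtain ⟨b | b, v⟩ := c' <;>
    simp only [vec, Matrix.cons_val_zero, Matrix.cons_val_one]
  · rw [if_pos trivial]
    have : (1 : ℚ_[p]) * (((p : ℤ_[p]) * v : ℤ_[p]) : ℚ_[p]) - (((p : ℤ_[p]) * u : ℤ_[p]) : ℚ_[p]) * 1
        = (((p : ℤ_[p]) * (v - u) : ℤ_[p]) : ℚ_[p]) := by push_cast; ring
    rw [this, ← PadicInt.norm_def, norm_mul, PadicInt.norm_p, norm_sub_rev]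
  · rw [if_neg (by simp)]
    have : (1 : ℚ_[p]) * 1 - (((p : ℤ_[p]) * u : ℤ_[p]) : ℚ_[p]) * ((dg p (b, v) : ℤ_[p]) : ℚ_[p])
        = ((1 - (p : ℤ_[p]) * (u * dg p (b, v)) : ℤ_[p]) : ℚ_[p]) := by push_cast; ring
    rw [this, ← PadicInt.norm_def]
    exact norm_one_sub p _ (norm_pu p _)
  · rw [if_neg (by simp)]
    have : ((dg p (a, u) : ℤ_[p]) : ℚ_[p]) * (((p : ℤ_[p]) * v : ℤ_[p]) : ℚ_[p]) - 1 * 1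
        = -((1 - (p : ℤ_[p]) * (v * dg p (a, u)) : ℤ_[p]) : ℚ_[p]) := by push_cast; ring
    rw [this, norm_neg, ← PadicInt.norm_def]
    exact norm_one_sub p _ (norm_pu p _)
  · have : ((dg p (a, u) : ℤ_[p]) : ℚ_[p]) * 1 - 1 * ((dg p (b, v) : ℤ_[p]) : ℚ_[p]) =
        ((dg p (a, u) - dg p (b, v) : ℤ_[p]) : ℚ_[p]) := by push_cast; ring
    rw [this, ← PadicInt.norm_def, dg_norm]
    simp only [Option.some.injEq]

lemma vec_surj (ξ : P1 p) : ∃ c, Projectivization.mk ℚ_[p] (vec p c) (vec_ne p c) = ξ := by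
  induction ξ using Projectivization.ind with
  | h v hv =>
  by_cases h : ‖v 0‖ ≤ ‖v 1‖
  · have h1 : v 1 ≠ 0 := by
      intro h1
      rw [h1, norm_zero] at h
      apply hv
      funext i
      fin_cases i
      · exact norm_le_zero_iff.1 h
      · exact h1
    have hz : ‖v 0 / v 1‖ ≤ 1 := by
      rw [norm_div]; exact div_le_one_of_le₀ h (norm_nonneg _)
    obtain ⟨⟨a, u⟩, hc⟩ := dg_surj p ⟨v 0 / v 1, hz⟩
    refine ⟨(some a, u), ?_⟩
    rw [Projectivization.mk_eq_mk_iff']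
    refine ⟨(v 1)⁻¹, ?_⟩
    funext i
    fin_cases i
    · simp only [vec, hc, Fin.zero_eta, Pi.smul_apply, smul_eq_mul, Matrix.cons_val_zero]
      rw [div_eq_inv_mul]
    · simp only [vec, Fin.mk_one, Pi.smul_apply, smul_eq_mul, Matrix.cons_val_one]
      exact inv_mul_cancel₀ h1
  · push Not at h
    have h1 : v 0 ≠ 0 := by
      intro h1
      rw [h1, norm_zero] at h
      exact absurd h (not_lt.2 (norm_nonneg _))
    have hz : ‖v 1 / v 0‖ < 1 := by
      rw [norm_div]; exact (div_lt_one ((norm_nonneg _).trans_lt h)).2 h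
    obtain ⟨y, hy⟩ : ∃ y : ℤ_[p], (y : ℚ_[p]) = v 1 / v 0 := ⟨⟨v 1 / v 0, hz.le⟩, rfl⟩
    have hz' : ‖y‖ < 1 := by rw [PadicInt.norm_def, hy]; exact hz
    rw [PadicInt.norm_lt_one_iff_dvd] at hz'
    obtain ⟨u, hc⟩ := hz'
    refine ⟨(none, u), ?_⟩
    rw [Projectivization.mk_eq_mk_iff']
    refine ⟨(v 0)⁻¹, ?_⟩
    funext i
    fin_cases i
    · simp only [vec, Fin.zero_eta, Pi.smul_apply, smul_eq_mul, Matrix.cons_val_zero]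
      exact inv_mul_cancel₀ h1
    · simp only [vec, Fin.mk_one, Pi.smul_apply, smul_eq_mul, Matrix.cons_val_one]
      rw [← hc, hy, div_eq_inv_mul]; rfl

noncomputable def ch (ξ : P1 p) : Option (Fin p) × ℤ_[p] := (vec_surj p ξ).choose

lemma mk_ch (ξ : P1 p) : Projectivization.mk ℚ_[p] (vec p (ch p ξ)) (vec_ne p _) = ξ :=
  (vec_surj p ξ).choose_spec

lemma pdelta_ch (ξ η : P1 p) : pdelta p ξ η =
    if (ch p ξ).1 = (ch p η).1 then (p : ℝ)⁻¹ * ‖(ch p ξ).2 - (ch p η).2‖ else 1 := by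
  rw [← sdelta_vec, ← pdelta_mk p _ _ (vec_ne p _) (vec_ne p _), mk_ch, mk_ch]

lemma ch_mk (c) : ch p (Projectivization.mk ℚ_[p] (vec p c) (vec_ne p c)) = c := by
  set c' := ch p (Projectivization.mk ℚ_[p] (vec p c) (vec_ne p c)) with hc
  have h := mk_ch p (Projectivization.mk ℚ_[p] (vec p c) (vec_ne p c))
  rw [← hc] at h
  have h0 : sdelta p (vec p c) (vec p c) = 0 := by simp [sdelta_vec]
  rw [← pdelta_mk p _ _ (vec_ne p _) (vec_ne p _)] at h0
  nth_rewrite 1 [← h] at h0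
  rw [pdelta_mk, sdelta_vec] at h0
  split_ifs at h0 with h1
  · refine Prod.ext h1 ?_
    have hp := p_pos p
    rcases mul_eq_zero.1 h0 with h | h
    · exact absurd h (by positivity)
    · exact sub_eq_zero.1 (norm_eq_zero.1 h)
  · exact absurd h0 (by norm_num)

noncomputable def DD (n : ℕ) (ξ : P1 p) : Option (Fin p) × Wd p n := ((ch p ξ).1, wd p n (ch p ξ).2)

lemma DD_surj (n : ℕ) (a) : ∃ ξ, DD p n ξ = a := by
  obtain ⟨z, hz⟩ := wd_surj p n a.2
  refine ⟨Projectivization.mk ℚ_[p] (vec p (a.1, z)) (vec_ne p _), ?_⟩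
  rw [DD, ch_mk, hz]

lemma DD_eq (n : ℕ) (ξ η : P1 p) :
    DD p n ξ = DD p n η ↔ pdelta p ξ η ≤ ((p : ℝ) ^ (n + 1))⁻¹ := by
  rw [DD, DD, Prod.mk_inj, wd_eq, pdelta_ch]
  split_ifs with h
  · rw [inv_pow_iff]; simp [h]
  · simp only [h, false_and, false_iff]; exact not_one_le p n

lemma kapT_DD (z : ℂ) (n : ℕ) (ξ η : P1 p) :
    kapT p ((p : ℂ) ^ (-z)) n (DD p n ξ) (DD p n η) =
      if pdelta p ξ η ≤ ((p : ℝ) ^ (n + 1))⁻¹ then 0 else ((pdelta p ξ η : ℝ) : ℂ) ^ z := by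
  rw [kapT, DD, DD]
  simp only
  rw [kap_wd, pdelta_ch]
  by_cases h : (ch p ξ).1 = (ch p η).1
  · simp only [if_pos h, inv_pow_iff]
    split_ifs
    · simp
    · rw [scale_cpow p z _ (norm_nonneg _)]
  · simp only [if_neg h, if_neg (not_one_le p n)]
    simp

lemma DD_fiber (n : ℕ) (ξ : P1 p) :
    DD p n ⁻¹' {DD p n ξ} = {η | pdelta p ξ η ≤ ((p : ℝ) ^ (n + 1))⁻¹} := by
  ext η
  rw [Set.mem_preimage, Set.mem_singleton_iff, eq_comm, DD_eq]
  rfl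

lemma DD_meas (n : ℕ) (a) : MeasurableSet (DD p n ⁻¹' {a}) := by
  obtain ⟨ξ, rfl⟩ := DD_surj p n a
  rw [DD_fiber]
  exact (isClosed_ball p _ _).measurableSet

lemma e_ne : (![0, 1] : Fin 2 → ℚ_[p]) ≠ 0 := by
  intro h
  have h1 := congrFun h 1
  simp at h1

lemma ball_eq (ν : Measure (P1 p)) (hν : IsGLInvariant p ν) (ξ : P1 p) (r : ℝ) :
    ν {x | pdelta p ξ x ≤ r} =
      ν {x | pdelta p (Projectivization.mk ℚ_[p] ![0, 1] (e_ne p)) x ≤ r} := by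
  rw [← mk_ch p ξ]
  obtain ⟨a | a, u⟩ := ch p ξ
  · have hy := PadicInt.norm_le_one ((p : ℤ_[p]) * u)
    rw [PadicInt.norm_def] at hy
    refine le_antisymm ?_ ?_
    · refine ball_le p ν hν !![-(((p : ℤ_[p]) * u : ℤ_[p]) : ℚ_[p]), 1; 1, 0] ?_ ?_ _ _
        (mobius_mk p _ ?_ ?_ _ _ _ _ ?_) r
      rotate_left 4
      · funext i
        fin_cases i <;> simp [vec, Matrix.mulVec, dotProduct]
      all_goals first
        | (rw [Matrix.det_fin_two]; simp)
        | (intro i j; fin_cases i <;> fin_cases j <;> simp; simpa using hy)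
    · refine ball_le p ν hν !![0, 1; 1, (((p : ℤ_[p]) * u : ℤ_[p]) : ℚ_[p])] ?_ ?_ _ _
        (mobius_mk p _ ?_ ?_ _ _ _ _ ?_) r
      rotate_left 4
      · funext i
        fin_cases i <;> simp [vec, Matrix.mulVec, dotProduct]
      all_goals first
        | (rw [Matrix.det_fin_two]; simp)
        | (intro i j; fin_cases i <;> fin_cases j <;> simp; simpa using hy)
  · have hy := PadicInt.norm_le_one (dg p (a, u))
    rw [PadicInt.norm_def] at hy
    refine le_antisymm ?_ ?_
    · refine ball_le p ν hν !![1, -((dg p (a, u) : ℤ_[p]) : ℚ_[p]); 0, 1] ?_ ?_ _ _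
        (mobius_mk p _ ?_ ?_ _ _ _ _ ?_) r
      rotate_left 4
      · funext i
        fin_cases i <;> simp [vec, Matrix.mulVec, dotProduct]
      all_goals first
        | (rw [Matrix.det_fin_two]; simp)
        | (intro i j; fin_cases i <;> fin_cases j <;> simp; simpa using hy)
    · refine ball_le p ν hν !![1, ((dg p (a, u) : ℤ_[p]) : ℚ_[p]); 0, 1] ?_ ?_ _ _
        (mobius_mk p _ ?_ ?_ _ _ _ _ ?_) r
      rotate_left 4
      · funext i
        fin_cases i <;> simp [vec, Matrix.mulVec, dotProduct]
      all_goals first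
        | (rw [Matrix.det_fin_two]; simp)
        | (intro i j; fin_cases i <;> fin_cases j <;> simp; simpa using hy)

lemma DD_measure (ν : Measure (P1 p)) [IsProbabilityMeasure ν] (hν : IsGLInvariant p ν)
    (n : ℕ) (a) :
    ν (DD p n ⁻¹' {a}) = ((Fintype.card (Option (Fin p) × Wd p n) : ENNReal))⁻¹ := by
  have h : ∀ b, ν (DD p n ⁻¹' {b}) = ν (DD p n ⁻¹' {a}) := by
    intro b
    obtain ⟨ξ, rfl⟩ := DD_surj p n b
    obtain ⟨η, rfl⟩ := DD_surj p n a
    rw [DD_fiber, DD_fiber, ball_eq p ν hν ξ, ball_eq p ν hν η]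
  have h2 := sum_measure_preimage_singleton (μ := ν) (f := DD p n) Finset.univ
    (fun b _ => DD_meas p n b)
  rw [Finset.coe_univ, Set.preimage_univ, measure_univ] at h2
  simp only [h] at h2
  rw [Finset.sum_const, nsmul_eq_mul, Finset.card_univ] at h2
  rw [mul_comm] at h2
  exact ENNReal.eq_inv_of_mul_eq_one_left h2

end Proj

section Final
open Finset Filter Topology

variable {N : ℕ} (p : ℕ) [hpf : Fact p.Prime]

lemma prod_cpow {ι : Type*} (S : Finset ι) (f : ι → ℂ) :
    ∏ q ∈ S, (p : ℂ) ^ (f q) = (p : ℂ) ^ (∑ q ∈ S, f q) := by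
  classical
  have hp0 : (p : ℂ) ≠ 0 := by exact_mod_cast hpf.out.ne_zero
  induction S using Finset.induction_on with
  | empty => simp
  | insert a S ha ih => rw [Finset.prod_insert ha, Finset.sum_insert ha, ih, Complex.cpow_add _ _ hp0]

lemma cc_inv (s : Fin N → Fin N → ℂ) (I : Finset (Fin N)) (hI : I.Nonempty) :
    (cc p (fun q => (p : ℂ) ^ (-s q.1 q.2)) I)⁻¹ = (p : ℂ) ^ eexp I s := by
  have hp0 : (p : ℂ) ≠ 0 := by exact_mod_cast hpf.out.ne_zero
  have hc : 1 ≤ I.card := Finset.card_pos.2 hI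
  rw [cc, prod_cpow p _ (fun q : Fin N × Fin N => -s q.1 q.2), Finset.sum_neg_distrib,
    Complex.cpow_neg, inv_div, div_inv_eq_mul, eexp, Complex.cpow_add _ _ hp0]
  have : (I.card : ℂ) - 1 = ((I.card - 1 : ℕ) : ℂ) := by rw [Nat.cast_sub hc]; simp
  rw [this, Complex.cpow_natCast]
  rfl

lemma cc_lt (s : Fin N → Fin N → ℂ) (I : Finset (Fin N)) (hI : I.Nonempty) :
    ‖cc p (fun q => (p : ℂ) ^ (-s q.1 q.2)) I‖ < 1 ↔ 0 < (eexp I s).re := by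
  have h := cc_inv p s I hI
  rw [← inv_inv (cc p _ I), h, norm_inv, Complex.norm_natCast_cpow_of_pos hpf.out.pos]
  have hp1 := one_lt_p p
  rw [inv_lt_one₀ (Real.rpow_pos_of_pos (p_pos p) _), Real.one_lt_rpow_iff_of_pos (p_pos p)]
  constructor
  · rintro (⟨_, h⟩ | ⟨h, _⟩)
    · exact h
    · exact absurd h (not_lt.2 hp1.le)
  · intro h; exact Or.inl ⟨hp1, h⟩

end Final

theorem statement_0 (p : ℕ) [Fact p.Prime] (N : ℕ) (hN : 2 ≤ N)
    (ν : Measure (P1 p)) [IsProbabilityMeasure ν] (hν : IsGLInvariant p ν)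
    (s : Fin N → Fin N → ℂ) :
    (Integrable
        (fun x : Fin N → P1 p =>
          ∏ q ∈ pairs N, ((pdelta p (x q.1) (x q.2) : ℝ) : ℂ) ^ s q.1 q.2)
        (Measure.pi fun _ => ν) ↔ InOmega Finset.univ s) ∧
    (InOmega Finset.univ s →
      ZP1s p ν N s =
        (1 / ((p : ℂ) + 1) ^ (N - 1)) *
          ∑ᶠ S ∈ {S : SplChain N Finset.univ | S.Reduced},
            (((p : ℂ) ^ ((N : ℂ) + ∑ q ∈ pairs N, s q.1 q.2) + 1 -
                  (S.degree Finset.univ : ℂ)) *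
                ((p - 1).descFactorial (S.degree Finset.univ - 2) : ℂ) /
                  ((p : ℂ) ^ eexp Finset.univ s - 1)) *
              ∏ lam ∈ S.branches.erase Finset.univ,
                ((p - 1).descFactorial (S.degree lam - 1) : ℂ) /
                  ((p : ℂ) ^ eexp lam s - 1)) := by
  have hpp : p.Prime := Fact.out
  haveI : NeZero p := ⟨hpp.ne_zero⟩
  have hp0 : (p : ℂ) ≠ 0 := by exact_mod_cast hpp.ne_zero
  set t : Fin N × Fin N → ℂ := fun q => (p : ℂ) ^ (-s q.1 q.2) with ht
  have ht0 : ∀ q, t q ≠ 0 := fun q => by rw [ht]; simp [Complex.cpow_eq_zero_iff, hp0]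
  have main := meas_main ν p hpp.two_le hN (pdelta p)
    (fun x y => by
      rw [pdelta, sdelta_def]
      exact div_nonneg (norm_nonneg _) (mul_nonneg (mx_nonneg p _) (mx_nonneg p _)))
    (DD p) (DD_meas p) (DD_measure p ν hν)
    (fun n x y h => by
      rw [DD_eq, h]
      positivity) s (kapT_DD p) t (fun q => rfl)
  have hom : (∀ I : Finset (Fin N), 1 < I.card → ‖cc p t I‖ < 1) ↔ InOmega Finset.univ s := by
    constructor
    · intro h I _ hI
      exact (cc_lt p s I (Finset.card_pos.1 (by omega))).1 (h I hI)
    · intro h I hI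
      exact (cc_lt p s I (Finset.card_pos.1 (by omega))).2 (h I (Finset.subset_univ _) hI)
  refine ⟨main.1.trans hom, fun hO => ?_⟩
  have hc := hom.2 hO
  obtain ⟨V, hV⟩ := vv_tendsto p t hc
  have hT := tendsto_nhds_unique (main.2 hc) (top_limit p hN t ht0 hc V hV)
  have hne : (Finset.univ : Finset (Fin N)).Nonempty := ⟨⟨0, by omega⟩, Finset.mem_univ _⟩
  have hpu : (p : ℂ) * (p : ℂ) ^ eexp Finset.univ s =
      (p : ℂ) ^ ((N : ℂ) + ∑ q ∈ pairs N, s q.1 q.2) := by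
    have h : (N : ℂ) + ∑ q ∈ pairs N, s q.1 q.2 = 1 + eexp Finset.univ s := by
      simp only [eexp, Finset.mem_univ, and_self, Finset.filter_true, Finset.card_univ,
        Fintype.card_fin]
      ring
    rw [h, Complex.cpow_add _ _ hp0, Complex.cpow_one]
  rw [ZP1s, hT]
  congr 1
  rw [cc_inv p s _ hne, hpu]
  refine (chain_sum hN
    (fun B d => ((p - 1).descFactorial (d - 1) : ℂ) / ((p : ℂ) ^ eexp B s - 1))
    (fun d => (((p : ℂ) ^ ((N : ℂ) + ∑ q ∈ pairs N, s q.1 q.2) + 1 - (d : ℂ)) *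
                ((p - 1).descFactorial (d - 2) : ℂ) /
                  ((p : ℂ) ^ eexp Finset.univ s - 1))) V ?_ ?_).symm
  · intro B hB
    refine tendsto_nhds_unique (hV B (Finset.card_pos.1 (by omega))) ?_
    simp only [vv_one p t _ B hB]
    exact tendsto_const_nhds
  · intro B hB
    rw [V_rec p t ht0 hc V hV B hB, cc_inv p s B (Finset.card_pos.1 (by omega))]

end LogCoulomb
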